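/- Let n ≥ 2 and let A, B ⊆ ℝⁿ be Borel sets with dimH A > n−1, dimH B ≤ n−1 and dimH A + dimH B > 2(n−1). Then for every ε > 0, the set of unit vectors e ∈ S^{n−1} for which dimH(P_e(A) ∩ P_e(B)) > dimH B − ε has positive (n−1)-dimensional Hausdorff measure in S^{n−1}. -/

import Mathlib

open MeasureTheory Metric Set
open scoped ENNReal RealInnerProductSpace

/-!
Up to a bi-Lipschitz change of directions, the projection along `(1, v)` is the skew projection
`π_v x = (x₁, …, x_m) - x₀ v` to `ℝᵐ`, where `m = n - 1`. Take Frostman measures `μ` on a compact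
part of `A` and `ν` on a compact part of `B`, of exponents above `s` and `β` respectively, where
`s + β > 2m`. Given a compact set of pairs (point, direction), restrict `ν` to its section over `v`,
smooth the `π_v`-images of `μ` and of the restricted `ν` at scale `r`, and pair them in `L²`,
integrating over `v`. The increment of this pairing from one dyadic scale to the next is at most
the geometric mean of a term gaining `r^(s - m)` from the `s`-energy of `μ` averaged over directions
and a term losing at most `r^(β - m)` from the `β`-energies of the sections. As `s + β > 2m`, the
increments sum to at most `C (η + η⁻¹ · energy)` for every `η > 0`, uniformly in the scale.

Now suppose that for almost every `v` the points of `supp ν` whose projection meets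
`π_v (supp μ)` were `ν`-null. Shrinking neighbourhoods of this set of pairs would send the energies
to zero, although near the set the total pairing stays bounded below. Hence for a set of directions
of positive measure, `ν` charges these points, and a set charged by a measure of finite `β`-energy
has dimension at least `β`; the projected version of this estimate bounds the intersection.
-/

/-! ### Capacities -/

section Capacity

open PiNat

/-- A Choquet capacity on `X`, in the form needed for capacitability: a monotone set function which
is continuous along increasing sequences and outer regular on compact sets. -/
structure IsCapacity {X α : Type*} [TopologicalSpace X] [CompleteLinearOrder α]
    (c : Set X → α) : Prop where
  mono : Monotone c
  iUnion_le : ∀ ⦃A : ℕ → Set X⦄, Monotone A → c (⋃ n, A n) ≤ ⨆ n, c (A n)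
  exists_isOpen_lt : ∀ ⦃K : Set X⦄, IsCompact K → ∀ b, c K < b → ∃ U ⊇ K, IsOpen U ∧ c U < b

theorem exists_cylinder_subset_of_isCompact {σ : Type*} [TopologicalSpace σ] [DiscreteTopology σ]
    {K U : Set (ℕ → σ)} (hK : IsCompact K) (hU : IsOpen U) (hKU : K ⊆ U) :
    ∃ j, ∀ x ∈ K, cylinder x j ⊆ U := by
  refine hK.induction_on (p := fun S => ∃ j, ∀ x ∈ S, cylinder x j ⊆ U) ⟨0, by simp⟩ ?_ ?_ ?_
  · rintro s t hst ⟨j, hj⟩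
    exact ⟨j, fun x hx => hj x (hst hx)⟩
  · rintro s t ⟨i, hi⟩ ⟨j, hj⟩
    refine ⟨max i j, fun x hx => hx.elim (fun hx => ?_) fun hx => ?_⟩
    · exact (cylinder_anti x (le_max_left i j)).trans (hi x hx)
    · exact (cylinder_anti x (le_max_right i j)).trans (hj x hx)
  · intro x hx
    obtain ⟨_, ⟨x₀, n, rfl⟩, hxn, hn⟩ :=
      (isTopologicalBasis_cylinders fun _ : ℕ => σ).mem_nhds_iff.1 (hU.mem_nhds (hKU hx))
    refine ⟨cylinder x₀ n, mem_nhdsWithin_of_mem_nhds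
      ((isOpen_cylinder _ x₀ n).mem_nhds hxn), n, fun y hy => ?_⟩
    rwa [mem_cylinder_iff_eq.1 hy]

variable {X α : Type*} [TopologicalSpace X] [CompleteLinearOrder α] {c : Set X → α}

theorem IsCapacity.exists_lt_image_inter (hc : IsCapacity c) (f : (ℕ → ℕ) → X) {a : α}
    {D : Set (ℕ → ℕ)} (h : a < c (f '' D)) (j : ℕ) :
    ∃ k, a < c (f '' (D ∩ {x | x j ≤ k})) := by
  have hmono : Monotone fun k : ℕ => f '' (D ∩ {x | x j ≤ k}) := fun k l hkl =>
    image_mono (inter_subset_inter_right _ fun x (hx : x j ≤ k) => hx.trans hkl)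
  have hunion : ⋃ k : ℕ, f '' (D ∩ {x | x j ≤ k}) = f '' D := by
    rw [← image_iUnion, ← inter_iUnion, inter_eq_left.2]
    exact fun x _ => mem_iUnion.2 ⟨x j, le_refl (x j)⟩
  exact lt_iSup_iff.1 (h.trans_le (hunion ▸ hc.iUnion_le hmono))

theorem IsCapacity.exists_forall_lt_image_box (hc : IsCapacity c) {f : (ℕ → ℕ) → X} {a : α}
    (h : a < c (range f)) : ∃ b : ℕ → ℕ, ∀ j, a < c (f '' {x | ∀ i < j, x i ≤ b i}) := by
  choose k hk using fun (D : {D : Set (ℕ → ℕ) // a < c (f '' D)}) (j : ℕ) =>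
    hc.exists_lt_image_inter f D.2 j
  let D (j : ℕ) : {D : Set (ℕ → ℕ) // a < c (f '' D)} :=
    Nat.rec ⟨univ, by rwa [image_univ]⟩ (fun j D => ⟨_, hk D j⟩) j
  have hD (j : ℕ) : (D j).1 = {x | ∀ i < j, x i ≤ k (D i) i} := by
    induction j with
    | zero => ext; simp [D]
    | succ j ih =>
      ext x
      rw [show (D (j + 1)).1 = (D j).1 ∩ {x | x j ≤ k (D j) j} from rfl, ih]
      exact Nat.forall_lt_succ_right.symm
  exact ⟨fun i => k (D i) i, fun j => hD j ▸ (D j).2⟩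

/-- **Choquet's capacitability theorem**: capacities of analytic sets are approximated from inside
by compact sets. -/
theorem IsCapacity.exists_isCompact_subset (hc : IsCapacity c) {A : Set X} (hA : AnalyticSet A)
    {a : α} (ha : a < c A) : ∃ K ⊆ A, IsCompact K ∧ a ≤ c K := by
  rw [AnalyticSet] at hA
  obtain rfl | ⟨f, hf, rfl⟩ := hA
  · exact ⟨∅, subset_rfl, isCompact_empty, ha.le⟩
  obtain ⟨b, hb⟩ := hc.exists_forall_lt_image_box ha
  have hbox : IsCompact (univ.pi fun i => Iic (b i)) :=
    isCompact_univ_pi fun i => (finite_Iic _).isCompact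
  refine ⟨f '' univ.pi fun i => Iic (b i), image_subset_range _ _, hbox.image hf, ?_⟩
  by_contra! hlt
  obtain ⟨U, hKU, hU, hcU⟩ := hc.exists_isOpen_lt (hbox.image hf) a hlt
  obtain ⟨j, hj⟩ := exists_cylinder_subset_of_isCompact hbox (hU.preimage hf)
    (image_subset_iff.1 hKU)
  refine (hb j).not_ge ((hc.mono ?_).trans hcU.le)
  rintro _ ⟨x, hx, rfl⟩
  refine hj (fun i => if i < j then x i else 0) (fun i _ => ?_) fun i hi => by simp [hi]
  by_cases hi : i < j
  · simpa [hi] using hx i hi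
  · simp [hi]

end Capacity

/-! ### Net content on a tree of sequences -/

namespace TreeContent

open PiNat Filter Topology

variable {σ : Type*}

/-- The sequences having an initial segment in `W`. As with `PiNat.res`, words are read backwards,
so that initial segments of sequences are suffixes of lists. -/
def cylinders (W : Set (List σ)) : Set (ℕ → σ) := {x | ∃ n, res x n ∈ W}

/-- The sequences with initial segment `w`; the version of `PiNat.cylinder` indexed by words. -/
def cyl (w : List σ) : Set (ℕ → σ) := {x | res x w.length = w}

/-- The words of `S` without a proper initial segment in `S`. -/
def minimal (S : Set (List σ)) : Set (List σ) := {w ∈ S | ∀ u ∈ S, u <:+ w → u = w}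

/-- The total weight of a set of words, where a word of length `k` has weight `θ ^ k`. -/
noncomputable def cost (θ : ℝ≥0∞) (W : Set (List σ)) : ℝ≥0∞ := ∑' w : W, θ ^ w.1.length

/-- The net content with ratio `θ`: the least cost of a cover by cylinders. -/
noncomputable def content (θ : ℝ≥0∞) (E : Set (ℕ → σ)) : ℝ≥0∞ :=
  ⨅ (W : Set (List σ)) (_ : E ⊆ cylinders W), cost θ W

variable {θ : ℝ≥0∞} {E F : Set (ℕ → σ)} {S T W : Set (List σ)} {u w : List σ} {x : ℕ → σ}

theorem mem_cyl : x ∈ cyl w ↔ res x w.length = w := Iff.rfl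

theorem cylinders_singleton (w : List σ) : cylinders {w} = cyl w := by
  ext x
  refine ⟨?_, fun h => ⟨w.length, h⟩⟩
  rintro ⟨n, rfl : res x n = w⟩
  rw [mem_cyl, res_length]

theorem cyl_nil : cyl ([] : List σ) = univ := by
  ext x; simp [cyl]

theorem cyl_eq_iUnion (w : List σ) : cyl w = ⋃ a, cyl (a :: w) := by
  ext x
  simp [cyl]

theorem disjoint_cyl_cons {a b : σ} (h : a ≠ b) (w : List σ) :
    Disjoint (cyl (a :: w)) (cyl (b :: w)) :=
  disjoint_left.2 fun _ ha hb => h (List.cons.inj (ha.symm.trans hb)).1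

theorem cyl_subset_cyl (h : u.length ≤ w.length) (hu : x ∈ cyl u) (hw : x ∈ cyl w) :
    cyl w ⊆ cyl u := by
  intro y hy
  rw [mem_cyl] at hu hw hy ⊢
  rw [← hu, res_length, res_eq_res]
  rw [← hw, res_length, res_eq_res] at hy
  exact fun i hi => hy (hi.trans_le h)

theorem cylinders_mono (h : S ⊆ T) : cylinders S ⊆ cylinders T :=
  fun _ ⟨n, hn⟩ => ⟨n, h hn⟩

theorem isOpen_cylinders [TopologicalSpace σ] [DiscreteTopology σ] : IsOpen (cylinders W) := by
  refine isOpen_iff_mem_nhds.2 fun x ⟨n, hn⟩ => ?_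
  refine mem_of_superset ((isOpen_cylinder _ x n).mem_nhds (self_mem_cylinder x n)) fun y hy => ?_
  rw [cylinder_eq_res] at hy
  exact ⟨n, (hy : res y n = res x n) ▸ hn⟩

theorem isOpen_cyl [TopologicalSpace σ] [DiscreteTopology σ] (w : List σ) : IsOpen (cyl w) :=
  cylinders_singleton w ▸ isOpen_cylinders

theorem res_suffix_res (x : ℕ → σ) {m n : ℕ} (h : m ≤ n) : res x m <:+ res x n := by
  induction n, h using Nat.le_induction with
  | base => exact List.suffix_rfl
  | succ n _ ih => exact ih.trans (res_succ x n ▸ List.suffix_cons _ _)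

theorem eq_res_of_suffix {n : ℕ} (h : u <:+ res x n) : u = res x u.length := by
  induction n with
  | zero => simp_all
  | succ n ih =>
    rw [res_succ, List.suffix_cons_iff] at h
    rcases h with rfl | h
    · simp
    · exact ih h

theorem exists_minimal_suffix (hw : w ∈ S) : ∃ u ∈ minimal S, u <:+ w := by
  induction hn : w.length using Nat.strong_induction_on generalizing w with
  | _ n ih =>
    subst hn
    by_cases h : w ∈ minimal S
    · exact ⟨w, h, List.suffix_rfl⟩
    · simp only [minimal, mem_ofPred_eq, hw, true_and, not_forall] at h
      obtain ⟨u, hu, huw, hne⟩ := h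
      have hlt : u.length < w.length := huw.length_le.lt_of_ne fun h => hne (huw.eq_of_length h)
      obtain ⟨v, hv, hvu⟩ := ih _ hlt hu rfl
      exact ⟨v, hv, hvu.trans huw⟩

theorem cylinders_subset_minimal : cylinders S ⊆ cylinders (minimal S) := by
  rintro x ⟨n, hn⟩
  obtain ⟨u, hu, hux⟩ := exists_minimal_suffix hn
  exact ⟨u.length, eq_res_of_suffix hux ▸ hu⟩

theorem res_notMem_minimal {i j : ℕ} (hij : i < j) (hi : res x i ∈ S) :
    res x j ∉ minimal S := fun hm => by
  have := congrArg List.length (hm.2 _ hi (res_suffix_res x hij.le))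
  simp only [res_length] at this
  omega

theorem cost_eq_tsum_indicator (θ : ℝ≥0∞) (W : Set (List σ)) :
    cost θ W = ∑' w, W.indicator (fun w => θ ^ w.length) w :=
  tsum_subtype W fun w => θ ^ w.length

theorem pow_length_le_cost (hw : w ∈ W) : θ ^ w.length ≤ cost θ W :=
  ENNReal.le_tsum (f := fun w : W => θ ^ w.1.length) ⟨w, hw⟩

theorem content_le (h : E ⊆ cylinders W) : content θ E ≤ cost θ W := iInf₂_le W h

theorem exists_cover_lt {b : ℝ≥0∞} (h : content θ E < b) : ∃ W, E ⊆ cylinders W ∧ cost θ W < b := by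
  simpa [content, iInf_lt_iff] using h

theorem content_mono (h : E ⊆ F) : content θ E ≤ content θ F :=
  le_iInf₂ fun _ hW => content_le (h.trans hW)

theorem content_empty : content θ (∅ : Set (ℕ → σ)) = 0 :=
  le_antisymm ((content_le (W := ∅) (empty_subset _)).trans_eq (by simp [cost])) zero_le

theorem content_inter_cyl_le (w : List σ) : content θ (E ∩ cyl w) ≤ θ ^ w.length :=
  (content_le (W := {w}) (cylinders_singleton w ▸ inter_subset_right)).trans_eq
    (tsum_singleton w fun w => θ ^ w.length)

theorem content_ne_top : content θ E ≠ ∞ := by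
  have h : content θ E ≤ 1 := by
    simpa [cyl_nil] using content_inter_cyl_le (θ := θ) (E := E) []
  exact ne_top_of_le_ne_top ENNReal.one_ne_top h

theorem exists_cover (θ : ℝ≥0∞) (E : Set (ℕ → σ)) {δ : ℝ≥0∞} (hδ : δ ≠ 0) :
    ∃ W, E ⊆ cylinders W ∧ cost θ W ≤ content θ E + δ := by
  obtain ⟨W, hW, h⟩ := exists_cover_lt (ENNReal.lt_add_right (content_ne_top (θ := θ) (E := E)) hδ)
  exact ⟨W, hW, h.le⟩

theorem content_iUnion_le {ι : Type*} [Countable ι] (E : ι → Set (ℕ → σ)) :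
    content θ (⋃ i, E i) ≤ ∑' i, content θ (E i) := by
  refine ENNReal.le_of_forall_pos_le_add fun ε hε _ => ?_
  obtain ⟨δ, hδ, hδε⟩ := ENNReal.exists_pos_sum_of_countable' (ε := ε) (by positivity) ι
  choose W hW hc using fun i => exists_cover θ (E i) (hδ i).ne'
  calc content θ (⋃ i, E i) ≤ cost θ (⋃ i, W i) := content_le <| iUnion_subset fun i =>
        (hW i).trans (cylinders_mono (subset_iUnion W i))
    _ ≤ ∑' i, cost θ (W i) := ENNReal.tsum_iUnion_le_tsum (fun w : List σ => θ ^ w.length) W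
    _ ≤ ∑' i, (content θ (E i) + δ i) := ENNReal.tsum_le_tsum hc
    _ ≤ ∑' i, content θ (E i) + ε := by
      rw [ENNReal.tsum_add]
      gcongr

/-- Strong subadditivity of the content, at the level of covers. -/
theorem cost_minimal_add_content_le (hS : E ⊆ cylinders S) (hT : E ⊆ cylinders T) :
    cost θ (minimal (S ∪ T)) + content θ E ≤ cost θ S + cost θ T := by
  classical
  set V := minimal (S ∪ T)
  set U : Set (List σ) := ((S ∪ T) \ V) ∪ (S ∩ T)
  -- A point of `E` has an initial segment in `S` and one in `T`; they agree, or the longer one is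
  -- not minimal.
  have hcover : E ⊆ cylinders U := by
    intro x hx
    obtain ⟨i, hi⟩ := hS hx
    obtain ⟨j, hj⟩ := hT hx
    rcases lt_trichotomy i j with h | rfl | h
    · exact ⟨j, Or.inl ⟨Or.inr hj, res_notMem_minimal h (Or.inl hi)⟩⟩
    · exact ⟨i, Or.inr ⟨hi, hj⟩⟩
    · exact ⟨i, Or.inl ⟨Or.inl hi, res_notMem_minimal h (Or.inr hj)⟩⟩
  have hVST : V ⊆ S ∪ T := fun w hw => hw.1
  calc cost θ V + content θ E ≤ cost θ V + cost θ U := by gcongr; exact content_le hcover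
    _ ≤ cost θ S + cost θ T := by
      simp only [cost_eq_tsum_indicator]
      rw [← ENNReal.tsum_add, ← ENNReal.tsum_add]
      refine ENNReal.tsum_le_tsum fun w => ?_
      have := @hVST w
      by_cases hwS : w ∈ S <;> by_cases hwT : w ∈ T <;> by_cases hwV : w ∈ V <;>
        simp_all [U, indicator]

/-- Successive unions of covers, thinned out to their minimal words at every step. -/
def mergedCover (W : ℕ → Set (List σ)) : ℕ → Set (List σ)
  | 0 => W 0
  | n + 1 => minimal (mergedCover W n ∪ W (n + 1))

theorem cylinders_subset_mergedCover (W : ℕ → Set (List σ)) :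
    ∀ n, cylinders (W n) ⊆ cylinders (mergedCover W n)
  | 0 => subset_rfl
  | _ + 1 => (cylinders_mono subset_union_right).trans cylinders_subset_minimal

theorem cost_mergedCover_le {A : ℕ → Set (ℕ → σ)} {W : ℕ → Set (List σ)} {δ : ℕ → ℝ≥0∞}
    (hA : Monotone A) (hW : ∀ n, A n ⊆ cylinders (W n))
    (hcost : ∀ n, cost θ (W n) ≤ content θ (A n) + δ n) (n : ℕ) :
    cost θ (mergedCover W n) ≤ content θ (A n) + ∑ k ∈ Finset.range (n + 1), δ k := by
  induction n with
  | zero => simpa [mergedCover] using hcost 0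
  | succ n ih =>
    have h := cost_minimal_add_content_le (θ := θ)
      ((hW n).trans (cylinders_subset_mergedCover W n)) ((hA n.le_succ).trans (hW (n + 1)))
    refine (ENNReal.add_le_add_iff_right (content_ne_top (θ := θ) (E := A n))).1 ?_
    calc cost θ (mergedCover W (n + 1)) + content θ (A n)
        ≤ cost θ (mergedCover W n) + cost θ (W (n + 1)) := h
      _ ≤ (content θ (A n) + ∑ k ∈ Finset.range (n + 1), δ k) +
          (content θ (A (n + 1)) + δ (n + 1)) := add_le_add ih (hcost _)
      _ = _ := by rw [Finset.sum_range_succ _ (n + 1)]; ring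

/-- The shortest initial segment of `x` that ever belongs to a merged cover is never removed. -/
theorem cylinders_subset_eventually_mem_mergedCover (W : ℕ → Set (List σ)) (n : ℕ) :
    cylinders (W n) ⊆ cylinders {w | ∀ᶠ k in atTop, w ∈ mergedCover W k} := by
  classical
  intro x hx
  have hex : ∃ l, ∃ k, res x l ∈ mergedCover W k := by
    obtain ⟨l, hl⟩ := cylinders_subset_mergedCover W n hx
    exact ⟨l, n, hl⟩
  obtain ⟨k₀, hk₀⟩ := Nat.find_spec hex
  refine ⟨Nat.find hex, eventually_atTop.2 ⟨k₀, fun k hk => ?_⟩⟩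
  induction k, hk using Nat.le_induction with
  | base => exact hk₀
  | succ k _ ih =>
    obtain ⟨u, hu, hux⟩ := exists_minimal_suffix (S := mergedCover W k ∪ W (k + 1)) (Or.inl ih)
    have hmin : Nat.find hex ≤ u.length :=
      Nat.find_min' hex ⟨k + 1, eq_res_of_suffix hux ▸ hu⟩
    have : u = res x (Nat.find hex) :=
      hux.eq_of_length (hux.length_le.antisymm (by simpa using hmin))
    exact this ▸ hu

theorem cost_eventually_mem_le {V : ℕ → Set (List σ)} {b : ℝ≥0∞} (h : ∀ n, cost θ (V n) ≤ b) :
    cost θ {w | ∀ᶠ n in atTop, w ∈ V n} ≤ b := by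
  rw [cost, ENNReal.tsum_eq_iSup_sum]
  refine iSup_le fun s => ?_
  have hev : ∀ᶠ n in atTop, ∀ w ∈ s, w.1 ∈ V n := (Filter.eventually_all_finset s).2 fun w _ => w.2
  obtain ⟨n, hn⟩ := hev.exists
  calc ∑ w ∈ s, θ ^ w.1.length = ∑ w ∈ s, (V n).indicator (fun w => θ ^ w.length) w.1 :=
        Finset.sum_congr rfl fun w hw => (indicator_of_mem (hn w hw) fun w => θ ^ w.length).symm
    _ = ∑ w ∈ s.map (.subtype _), (V n).indicator (fun w => θ ^ w.length) w := by
        rw [Finset.sum_map]; rfl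
    _ ≤ cost θ (V n) := cost_eq_tsum_indicator θ (V n) ▸ ENNReal.sum_le_tsum _
    _ ≤ b := h n

theorem content_iUnion_le_of_monotone {A : ℕ → Set (ℕ → σ)} (hA : Monotone A) :
    content θ (⋃ n, A n) ≤ ⨆ n, content θ (A n) := by
  refine ENNReal.le_of_forall_pos_le_add fun ε hε _ => ?_
  obtain ⟨δ, hδ, hδε⟩ := ENNReal.exists_pos_sum_of_countable' (ε := ε) (by positivity) ℕ
  choose W hW hcost using fun n => exists_cover θ (A n) (hδ n).ne'
  refine (content_le (iUnion_subset fun n =>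
    (hW n).trans (cylinders_subset_eventually_mem_mergedCover W n))).trans
    (cost_eventually_mem_le fun n => (cost_mergedCover_le hA hW hcost n).trans ?_)
  gcongr
  · exact le_iSup (fun n => content θ (A n)) n
  · exact (ENNReal.sum_le_tsum _).trans hδε.le

theorem isCapacity_content [TopologicalSpace σ] [DiscreteTopology σ] (θ : ℝ≥0∞) :
    IsCapacity (content θ : Set (ℕ → σ) → ℝ≥0∞) where
  mono _ _ := content_mono
  iUnion_le _ := content_iUnion_le_of_monotone
  exists_isOpen_lt _ _ _ h := by
    obtain ⟨W, hW, hcost⟩ := exists_cover_lt h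
    exact ⟨_, hW, isOpen_cylinders, (content_le subset_rfl).trans_lt hcost⟩

/-! ### Frostman's lemma on a tree -/

variable [MeasurableSpace σ]

/-- `ρ` is a measure on `K ∩ cyl w` of full content, which satisfies the Frostman bound for the
cylinders of depth at most `k` below `w`. -/
structure IsFrostmanToDepth (θ : ℝ≥0∞) (K : Set (ℕ → σ)) (w : List σ) (k : ℕ)
    (ρ : Measure (ℕ → σ)) : Prop where
  measure_univ : ρ univ = content θ (K ∩ cyl w)
  measure_compl : ρ (K ∩ cyl w)ᶜ = 0
  measure_cyl_le : ∀ u, u.length ≤ w.length + k → ρ (cyl u) ≤ content θ (K ∩ cyl u)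

variable {K : Set (ℕ → σ)} {ρ : Measure (ℕ → σ)}

theorem measure_cyl_eq_zero_of_disjoint (h0 : ρ (K ∩ cyl w)ᶜ = 0)
    (hd : Disjoint (cyl u) (cyl w)) : ρ (cyl u) = 0 :=
  measure_mono_null (hd.mono_right inter_subset_right).subset_compl_right h0

theorem measure_cyl_le_content (h : ρ univ = content θ (K ∩ cyl w)) (h0 : ρ (K ∩ cyl w)ᶜ = 0)
    (hu : u.length ≤ w.length) : ρ (cyl u) ≤ content θ (K ∩ cyl u) := by
  by_cases hd : Disjoint (cyl u) (cyl w)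
  · exact (measure_cyl_eq_zero_of_disjoint h0 hd).trans_le zero_le
  · obtain ⟨x, hxu, hxw⟩ := not_disjoint_iff.1 hd
    calc ρ (cyl u) ≤ ρ univ := measure_mono (subset_univ _)
      _ ≤ content θ (K ∩ cyl u) :=
        h.trans_le (content_mono (inter_subset_inter_right _ (cyl_subset_cyl hu hxu hxw)))

variable [Finite σ]

theorem IsFrostmanToDepth.tsum {k : ℕ} {ρ : σ → Measure (ℕ → σ)}
    (hρ : ∀ a, IsFrostmanToDepth θ K (a :: w) k (ρ a))
    (h0 : ∑' a, content θ (K ∩ cyl (a :: w)) ≠ 0) :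
    IsFrostmanToDepth θ K w (k + 1)
      ((content θ (K ∩ cyl w) / ∑' a, content θ (K ∩ cyl (a :: w))) • Measure.sum ρ) := by
  set Λ := ∑' a, content θ (K ∩ cyl (a :: w))
  have hle : content θ (K ∩ cyl w) ≤ Λ := by
    rw [cyl_eq_iUnion w, inter_iUnion]
    exact content_iUnion_le _
  have hΛ : Λ ≠ ∞ := by
    have := Fintype.ofFinite σ
    exact (tsum_fintype _).trans_ne (ENNReal.sum_ne_top.2 fun a _ => content_ne_top)
  set q := content θ (K ∩ cyl w) / Λ
  have hq : q ≤ 1 := ENNReal.div_le_of_le_mul (by simpa using hle)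
  have hsum (E : Set (ℕ → σ)) : (q • Measure.sum ρ) E = q * ∑' a, ρ a E := by
    rw [Measure.smul_apply, Measure.sum_apply_of_countable, smul_eq_mul]
  have huniv : (q • Measure.sum ρ) univ = content θ (K ∩ cyl w) := by
    simp only [hsum, fun a => (hρ a).measure_univ]
    exact ENNReal.div_mul_cancel h0 hΛ
  have hcompl : (q • Measure.sum ρ) (K ∩ cyl w)ᶜ = 0 := by
    rw [hsum, ENNReal.tsum_eq_zero.2, mul_zero]
    refine fun a => measure_mono_null (compl_subset_compl.2 ?_) (hρ a).measure_compl
    rw [cyl_eq_iUnion w]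
    exact inter_subset_inter_right _ (subset_iUnion (fun a => cyl (a :: w)) a)
  refine ⟨huniv, hcompl, fun u hu => ?_⟩
  rcases le_or_gt u.length w.length with huw | huw
  · exact measure_cyl_le_content huniv hcompl huw
  by_cases hd : Disjoint (cyl u) (cyl w)
  · exact (measure_cyl_eq_zero_of_disjoint hcompl hd).trans_le zero_le
  obtain ⟨x, hxu, hxw⟩ := not_disjoint_iff.1 hd
  obtain ⟨a, ha⟩ := mem_iUnion.1 (cyl_eq_iUnion w ▸ hxw)
  have hua : cyl u ⊆ cyl (a :: w) := cyl_subset_cyl (by simpa using huw) ha hxu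
  have hzero (b : σ) (hb : b ≠ a) : ρ b (cyl u) = 0 :=
    measure_cyl_eq_zero_of_disjoint (hρ b).measure_compl
      ((disjoint_cyl_cons hb.symm w).mono_left hua)
  calc (q • Measure.sum ρ) (cyl u) = q * ρ a (cyl u) := by rw [hsum, tsum_eq_single a hzero]
    _ ≤ ρ a (cyl u) := mul_le_of_le_one_left zero_le hq
    _ ≤ content θ (K ∩ cyl u) := (hρ a).measure_cyl_le u (by simp only [List.length_cons]; omega)

variable [TopologicalSpace σ] [DiscreteTopology σ] [BorelSpace σ]

theorem exists_isFrostmanToDepth_zero (θ : ℝ≥0∞) (K : Set (ℕ → σ)) (w : List σ) :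
    ∃ ρ, IsFrostmanToDepth θ K w 0 ρ := by
  rcases (K ∩ cyl w).eq_empty_or_nonempty with h | ⟨x, hx⟩
  · exact ⟨0, by simp [h, content_empty], by simp, by simp⟩
  · have hcompl : (content θ (K ∩ cyl w) • Measure.dirac x) (K ∩ cyl w)ᶜ = 0 := by
      simp [hx.1, hx.2]
    exact ⟨content θ (K ∩ cyl w) • Measure.dirac x, by simp, hcompl,
      fun u hu => measure_cyl_le_content (by simp) hcompl hu⟩

theorem exists_isFrostmanToDepth (θ : ℝ≥0∞) (K : Set (ℕ → σ)) (k : ℕ) (w : List σ) :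
    ∃ ρ, IsFrostmanToDepth θ K w k ρ := by
  induction k generalizing w with
  | zero => exact exists_isFrostmanToDepth_zero θ K w
  | succ k ih =>
    choose ρ hρ using fun a => ih (a :: w)
    by_cases h0 : ∑' a, content θ (K ∩ cyl (a :: w)) = 0
    · have hw : content θ (K ∩ cyl w) ≤ 0 := by
        rw [← h0, cyl_eq_iUnion w, inter_iUnion]
        exact content_iUnion_le _
      exact ⟨0, by simpa using hw.antisymm' zero_le, by simp, by simp⟩
    · exact ⟨_, IsFrostmanToDepth.tsum hρ h0⟩

theorem exists_frostman_measure_of_isCompact (hK : IsCompact K) (h0 : content θ K ≠ 0) :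
    ∃ μ : Measure (ℕ → σ), IsProbabilityMeasure μ ∧ μ Kᶜ = 0 ∧
      ∀ w, μ (cyl w) ≤ (content θ K)⁻¹ * θ ^ w.length := by
  choose ρ hρ using fun k => exists_isFrostmanToDepth θ K k []
  have huniv (k) : ρ k univ = content θ K := by simpa [cyl_nil] using (hρ k).measure_univ
  have hcompl (k) : ρ k Kᶜ = 0 := by simpa [cyl_nil] using (hρ k).measure_compl
  let P (k : ℕ) : ProbabilityMeasure (ℕ → σ) := ⟨(content θ K)⁻¹ • ρ k,
    ⟨by rw [Measure.smul_apply, huniv, smul_eq_mul, ENNReal.inv_mul_cancel h0 content_ne_top]⟩⟩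
  obtain ⟨μ, -, hμ : Tendsto P (hyperfilter ℕ) (𝓝 μ)⟩ :=
    isCompact_univ.ultrafilter_le_nhds (f := Ultrafilter.map P (hyperfilter ℕ)) (by simp)
  have hopen {G : Set (ℕ → σ)} {b : ℝ≥0∞} {k₀ : ℕ} (hG : IsOpen G) (hb : ∀ k ≥ k₀, ρ k G ≤ b) :
      (μ : Measure (ℕ → σ)) G ≤ (content θ K)⁻¹ * b := by
    refine (ProbabilityMeasure.le_liminf_measure_open_of_tendsto hμ hG).trans
      (liminf_le_of_frequently_le' (Eventually.frequently ?_))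
    filter_upwards [Nat.hyperfilter_le_atTop (eventually_ge_atTop k₀)] with k hk
    exact mul_le_mul_right (hb k hk) _
  refine ⟨μ, inferInstance, ?_, fun w => ?_⟩
  · simpa using hopen (k₀ := 0) (b := 0) hK.isClosed.isOpen_compl fun k _ => (hcompl k).le
  · exact hopen (k₀ := w.length) (isOpen_cyl w) fun k hk =>
      ((hρ k).measure_cyl_le w (by simpa using hk)).trans (content_inter_cyl_le w)

end TreeContent

/-! ### Frostman's lemma in Euclidean space -/

/-- The Frostman condition of exponent `t`: balls satisfy `μ (closedBall x r) ≤ C * r ^ t`. -/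
def IsFrostman {X : Type*} [PseudoMetricSpace X] [MeasurableSpace X] (μ : Measure X) (t : ℝ) :
    Prop :=
  ∃ C : ℝ≥0∞, C ≠ ∞ ∧ ∀ x : X, ∀ r : ℝ, 0 < r → μ (closedBall x r) ≤ C * ENNReal.ofReal r ^ t

theorem IsFrostman.of_le_one {X : Type*} [PseudoMetricSpace X] [MeasurableSpace X] {μ : Measure X}
    [IsFiniteMeasure μ] {t : ℝ} (ht : 0 < t) {C : ℝ≥0∞} (hC : C ≠ ∞)
    (h : ∀ x : X, ∀ r : ℝ, 0 < r → r ≤ 1 → μ (closedBall x r) ≤ C * ENNReal.ofReal r ^ t) :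
    IsFrostman μ t := by
  refine ⟨C + μ univ, by finiteness, fun x r hr => ?_⟩
  rcases le_or_gt r 1 with hr1 | hr1
  · exact (h x r hr hr1).trans (by gcongr; exact le_self_add)
  · calc μ (closedBall x r) ≤ μ univ * 1 := by rw [mul_one]; exact measure_mono (subset_univ _)
      _ ≤ (C + μ univ) * ENNReal.ofReal r ^ t := by
        gcongr
        · exact le_add_self
        · exact ENNReal.one_le_rpow (by simpa using hr1.le) ht

namespace BinaryCoding

open PiNat Filter Topology TreeContent

/-- The natural number whose binary digits are the first `k` terms of `d`. -/
def leadingNat (d : ℕ → Fin 2) : ℕ → ℕ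
  | 0 => 0
  | k + 1 => 2 * leadingNat d k + d k

theorem eq_of_leadingNat_eq {d d' : ℕ → Fin 2} {k : ℕ} (h : leadingNat d k = leadingNat d' k) :
    ∀ j < k, d j = d' j := by
  induction k with
  | zero => simp
  | succ k ih =>
    simp only [leadingNat] at h
    have hd := (d k).isLt
    have hd' := (d' k).isLt
    intro j hj
    rcases Nat.lt_succ_iff_lt_or_eq.1 hj with hj | rfl
    · exact ih (by omega) j hj
    · exact Fin.ext (by omega)

theorem sum_ofDigitsTerm (d : ℕ → Fin 2) (k : ℕ) :
    ∑ i ∈ Finset.range k, Real.ofDigitsTerm d i = leadingNat d k * ((2 : ℝ) ^ k)⁻¹ := by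
  induction k with
  | zero => simp [leadingNat]
  | succ k ih =>
    rw [Finset.sum_range_succ, ih, leadingNat, Real.ofDigitsTerm]
    push_cast
    field_simp
    ring

theorem two_pow_mul_ofDigits_mem_Icc (d : ℕ → Fin 2) (k : ℕ) :
    2 ^ k * Real.ofDigits d ∈ Icc (leadingNat d k : ℝ) (leadingNat d k + 1) := by
  have htail : 2 ^ k * Real.ofDigits d = leadingNat d k + Real.ofDigits fun i => d (i + k) := by
    rw [Real.ofDigits_eq_sum_add_ofDigits d k, sum_ofDigitsTerm]
    push_cast
    field_simp
  rw [htail]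
  exact ⟨by linarith [Real.ofDigits_nonneg fun i => d (i + k)],
    by linarith [Real.ofDigits_le_one fun i => d (i + k)]⟩

theorem exists_leadingNat_eq {d : ℕ → Fin 2} {p : ℝ} {k : ℕ}
    (h : |Real.ofDigits d - p| ≤ ((2 : ℝ) ^ k)⁻¹) :
    ∃ a : Fin 4, (leadingNat d k : ℤ) = ⌈2 ^ k * p - 2⌉ + a := by
  have hscaled : |2 ^ k * Real.ofDigits d - 2 ^ k * p| ≤ 1 := by
    rw [← mul_sub, abs_mul, abs_of_pos (by positivity : (0 : ℝ) < 2 ^ k)]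
    exact (mul_le_mul_of_nonneg_left h (by positivity)).trans_eq
      (mul_inv_cancel₀ (by positivity))
  obtain ⟨hlow, hhigh⟩ := abs_le.1 hscaled
  obtain ⟨hM, hM'⟩ := two_pow_mul_ofDigits_mem_Icc d k
  have hle : ⌈2 ^ k * p - 2⌉ ≤ (leadingNat d k : ℤ) :=
    Int.ceil_le.2 (by push_cast; linarith)
  have hge : (leadingNat d k : ℤ) ≤ ⌈2 ^ k * p - 2⌉ + 3 := by
    have hceil := Int.le_ceil (2 ^ k * p - 2)
    have : ((leadingNat d k : ℤ) : ℝ) ≤ ((⌈2 ^ k * p - 2⌉ + 3 : ℤ) : ℝ) := by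
      push_cast
      linarith
    exact_mod_cast this
  obtain ⟨a, ha⟩ := Int.le.dest hle
  exact ⟨⟨a, by omega⟩, ha.symm⟩

section Code

variable {ι : Type*}

/-- The point of the unit cube with lowest corner `c` whose coordinates relative to `c` have the
given binary digits. -/
noncomputable def code (c : ι → ℝ) (x : ℕ → ι → Fin 2) : ι → ℝ :=
  fun i => c i + Real.ofDigits fun k => x k i

theorem continuous_code (c : ι → ℝ) : Continuous (code c) :=
  continuous_pi fun i => continuous_const.add (Real.continuous_ofDigits.comp
    (continuous_pi fun k => (continuous_apply i).comp (continuous_apply k)))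

theorem exists_code_eq {c p : ι → ℝ} (hp : p ∈ Icc c (c + 1)) : ∃ x, code c x = p := by
  have hdigits (i : ι) : ∃ d : ℕ → Fin 2, Real.ofDigits d = p i - c i := by
    obtain ⟨d, -, hd⟩ := Real.ofDigits_SurjOn (b := 2) one_lt_two
      (⟨sub_nonneg.2 (hp.1 i), sub_le_iff_le_add'.2 (hp.2 i)⟩ : p i - c i ∈ Icc (0 : ℝ) 1)
    exact ⟨d, hd⟩
  choose d hd using hdigits
  exact ⟨fun k i => d i k, funext fun i => by rw [code, hd, add_sub_cancel]⟩

variable [Fintype ι]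

theorem ediam_code_image_cyl_le (c : ι → ℝ) (w : List (ι → Fin 2)) :
    ediam (code c '' cyl w) ≤ (2⁻¹ : ℝ≥0∞) ^ w.length := by
  refine ediam_le ?_
  rintro _ ⟨x, hx : res x w.length = w, rfl⟩ _ ⟨y, hy : res y w.length = w, rfl⟩
  have hxy := res_eq_res.1 (hx.trans hy.symm)
  refine edist_pi_le_iff.2 fun i => ?_
  have habs := Real.abs_ofDigits_sub_ofDigits_le (x := fun k => x k i) (y := fun k => y k i)
    (n := w.length) fun k hk => by rw [hxy hk]
  rw [code, code, edist_add_left, edist_dist, Real.dist_eq, ← ENNReal.inv_pow,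
    ← ENNReal.ofReal_ofNat 2, ← ENNReal.ofReal_pow zero_le_two,
    ← ENNReal.ofReal_inv_of_pos (by positivity)]
  exact ENNReal.ofReal_le_ofReal (by simpa using habs)

theorem measure_preimage_code_le (c : ι → ℝ) {μ : Measure (ℕ → ι → Fin 2)} {D θ : ℝ≥0∞}
    (h : ∀ w, μ (cyl w) ≤ D * θ ^ w.length) (p : ι → ℝ) (k : ℕ) :
    μ (code c ⁻¹' closedBall p ((2 : ℝ) ^ k)⁻¹) ≤ 4 ^ Fintype.card ι * (D * θ ^ k) := by
  classical
  let piece (a : ι → Fin 4) : Set (ℕ → ι → Fin 2) :=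
    {x | ∀ i, (leadingNat (fun j => x j i) k : ℤ) = ⌈2 ^ k * (p i - c i) - 2⌉ + a i}
  have hcover : code c ⁻¹' closedBall p ((2 : ℝ) ^ k)⁻¹ ⊆ ⋃ a, piece a := by
    intro x (hx : dist (code c x) p ≤ ((2 : ℝ) ^ k)⁻¹)
    rw [dist_pi_le_iff (by positivity)] at hx
    choose a ha using fun i => exists_leadingNat_eq (d := fun j => x j i) (p := p i - c i)
      (k := k) (by rw [sub_sub_eq_add_sub, add_comm]; exact hx i)
    exact mem_iUnion.2 ⟨a, ha⟩
  have hpiece (a : ι → Fin 4) : μ (piece a) ≤ D * θ ^ k := by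
    rcases (piece a).eq_empty_or_nonempty with he | ⟨x, hx⟩
    · simp [he]
    refine (measure_mono fun y hy => ?_).trans ((h (res x k)).trans_eq (by simp))
    have hres : res y k = res x k := res_eq_res.2 fun {j} hj => funext fun i =>
      eq_of_leadingNat_eq (d := fun j => y j i) (d' := fun j => x j i)
        (by exact_mod_cast (hy i).trans (hx i).symm) j hj
    simpa [cyl] using hres
  calc μ (code c ⁻¹' closedBall p ((2 : ℝ) ^ k)⁻¹) ≤ ∑ a, μ (piece a) :=
        (measure_mono hcover).trans (measure_iUnion_fintype_le _ _)
    _ ≤ ∑ _a : ι → Fin 4, D * θ ^ k := Finset.sum_le_sum fun a _ => hpiece a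
    _ = 4 ^ Fintype.card ι * (D * θ ^ k) := by simp

theorem le_length_of_cost_le {σ : Type*} {θ : ℝ≥0∞} (h0 : θ ≠ 0) (h1 : θ < 1)
    {W : Set (List σ)} {j : ℕ} (h : cost θ W ≤ θ ^ j) {w : List σ} (hw : w ∈ W) :
    j ≤ w.length := by
  contrapose! h
  refine lt_of_lt_of_le ?_ (pow_length_le_cost hw)
  exact_mod_cast ENNReal.rpow_lt_rpow_of_exponent_gt (pos_iff_ne_zero.2 h0) h1
    (Nat.cast_lt (α := ℝ).2 h)

theorem tsum_ediam_rpow_le_cost (c : ι → ℝ) {t : ℝ} (ht : 0 ≤ t) (W : Set (List (ι → Fin 2))) :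
    ∑' w : W, ediam (code c '' cyl w.1) ^ t ≤ cost ((2⁻¹ : ℝ≥0∞) ^ t) W := by
  refine ENNReal.tsum_le_tsum fun w => ?_
  calc ediam (code c '' cyl w.1) ^ t ≤ ((2⁻¹ : ℝ≥0∞) ^ w.1.length) ^ t :=
        ENNReal.rpow_le_rpow (ediam_code_image_cyl_le c w.1) ht
    _ = ((2⁻¹ : ℝ≥0∞) ^ t) ^ w.1.length := by
        rw [← ENNReal.rpow_natCast, ← ENNReal.rpow_natCast, ← ENNReal.rpow_mul,
          ← ENNReal.rpow_mul, mul_comm]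

theorem hausdorffMeasure_eq_zero {c : ι → ℝ} {A : Set (ι → ℝ)} (hA : A ⊆ Icc c (c + 1)) {t : ℝ}
    (ht : 0 < t) (h : content ((2⁻¹ : ℝ≥0∞) ^ t) (code c ⁻¹' A) = 0) : μH[t] A = 0 := by
  set θ : ℝ≥0∞ := (2⁻¹ : ℝ≥0∞) ^ t
  have hθ0 : θ ≠ 0 := by simp [θ, ENNReal.rpow_eq_zero_iff]
  have hθ1 : θ < 1 := ENNReal.rpow_lt_one (by simp) ht
  choose W hW hcost using fun j : ℕ => exists_cover θ (code c ⁻¹' A) (pow_ne_zero j hθ0)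
  simp only [h, zero_add] at hcost
  have hsmall (j : ℕ) (w : W j) : ediam (code c '' cyl w.1) ≤ 2⁻¹ ^ j :=
    (ediam_code_image_cyl_le c w.1).trans (pow_le_pow_right_of_le_one' (by simp)
      (le_length_of_cost_le hθ0 hθ1 (hcost j) w.2))
  have hcover (j : ℕ) : A ⊆ ⋃ w : W j, code c '' cyl w.1 := fun p hp => by
    obtain ⟨x, rfl⟩ := exists_code_eq (hA hp)
    obtain ⟨k, hk⟩ := hW j hp
    exact mem_iUnion.2 ⟨⟨_, hk⟩, x, by simp [cyl], rfl⟩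
  refine le_antisymm ?_ zero_le
  calc μH[t] A ≤ liminf (fun j => ∑' w : W j, ediam (code c '' cyl w.1) ^ t) atTop :=
        Measure.hausdorffMeasure_le_liminf_tsum (ι := fun j => W j) t A (fun j => (2⁻¹ : ℝ≥0∞) ^ j)
          (ENNReal.tendsto_pow_atTop_nhds_zero_of_lt_one (by simp))
          (fun j w => code c '' cyl w.1) (.of_forall hsmall) (.of_forall hcover)
    _ ≤ liminf (fun j => θ ^ j) atTop := liminf_le_liminf <| .of_forall fun j =>
        (tsum_ediam_rpow_le_cost c ht.le (W j)).trans (hcost j)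
    _ = 0 := (ENNReal.tendsto_pow_atTop_nhds_zero_of_lt_one hθ1).liminf_eq

theorem isFrostman_map_code (c : ι → ℝ) {ρ : Measure (ℕ → ι → Fin 2)} [IsFiniteMeasure ρ]
    {t : ℝ} (ht : 0 < t) {D : ℝ≥0∞} (hD : D ≠ ∞)
    (hρ : ∀ w, ρ (cyl w) ≤ D * ((2⁻¹ : ℝ≥0∞) ^ t) ^ w.length) :
    IsFrostman (ρ.map (code c)) t := by
  have hcode := (continuous_code c).measurable
  refine .of_le_one ht (C := 4 ^ Fintype.card ι * D * 2 ^ t) (by finiteness) fun p r hr hr1 => ?_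
  rw [Measure.map_apply hcode isClosed_closedBall.measurableSet]
  obtain ⟨k, hk, hk'⟩ := exists_nat_pow_near_of_lt_one hr hr1 (y := (2⁻¹ : ℝ))
    (by norm_num) (by norm_num)
  rw [inv_pow] at hk'
  have hpow : ((2⁻¹ : ℝ≥0∞) ^ t) ^ k ≤ 2 ^ t * ENNReal.ofReal r ^ t := by
    rw [← ENNReal.mul_rpow_of_nonneg _ _ ht.le, ← ENNReal.rpow_natCast, ← ENNReal.rpow_mul,
      mul_comm, ENNReal.rpow_mul, ENNReal.rpow_natCast]
    refine ENNReal.rpow_le_rpow ?_ ht.le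
    have htwo : (2⁻¹ : ℝ≥0∞) = ENNReal.ofReal 2⁻¹ := by
      rw [ENNReal.ofReal_inv_of_pos two_pos, ENNReal.ofReal_ofNat]
    rw [htwo, ← ENNReal.ofReal_pow (by positivity), ← ENNReal.ofReal_ofNat 2,
      ← ENNReal.ofReal_mul zero_le_two]
    refine ENNReal.ofReal_le_ofReal ?_
    rw [pow_succ] at hk
    linarith
  calc ρ (code c ⁻¹' closedBall p r) ≤ ρ (code c ⁻¹' closedBall p ((2 : ℝ) ^ k)⁻¹) :=
        measure_mono (preimage_mono (closedBall_subset_closedBall hk'))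
    _ ≤ 4 ^ Fintype.card ι * (D * ((2⁻¹ : ℝ≥0∞) ^ t) ^ k) := measure_preimage_code_le c hρ p k
    _ ≤ 4 ^ Fintype.card ι * (D * (2 ^ t * ENNReal.ofReal r ^ t)) := by gcongr
    _ = 4 ^ Fintype.card ι * D * 2 ^ t * ENNReal.ofReal r ^ t := by ring

end Code

end BinaryCoding

open BinaryCoding TreeContent in
theorem exists_frostman_measure {ι : Type*} [Fintype ι] {A : Set (ι → ℝ)} (hA : AnalyticSet A)
    {t : ℝ} (ht : 0 < t) (h : ENNReal.ofReal t < dimH A) :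
    ∃ K ⊆ A, IsCompact K ∧ ∃ μ : Measure (ι → ℝ), IsProbabilityMeasure μ ∧ μ Kᶜ = 0 ∧
      IsFrostman μ t := by
  have hcover : A = ⋃ z : ι → ℤ, A ∩ Icc (fun i => (z i : ℝ)) ((fun i => (z i : ℝ)) + 1) := by
    rw [← inter_iUnion]
    refine (inter_eq_left.2 fun p _ => mem_iUnion.2 ⟨fun i => ⌊p i⌋, ?_⟩).symm
    exact ⟨fun i => Int.floor_le _, fun i => (Int.lt_floor_add_one _).le⟩
  rw [hcover, dimH_iUnion, lt_iSup_iff] at h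
  obtain ⟨z, hz⟩ := h
  set c : ι → ℝ := fun i => z i
  have hH : μH[t] (A ∩ Icc c (c + 1)) ≠ 0 := by
    have := hausdorffMeasure_of_lt_dimH (d := t.toNNReal) hz
    rw [Real.coe_toNNReal _ ht.le] at this
    simp [this]
  have hanalytic : AnalyticSet (code c ⁻¹' (A ∩ Icc c (c + 1))) := by
    refine AnalyticSet.preimage ?_ (continuous_code c)
    rw [inter_eq_iInter]
    exact .iInter (Bool.rec isClosed_Icc.analyticSet hA)
  obtain ⟨a, ha0, ha⟩ := exists_between
    (pos_iff_ne_zero.2 (mt (hausdorffMeasure_eq_zero inter_subset_right ht) hH))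
  obtain ⟨L, hLA, hL, haL⟩ := (isCapacity_content _).exists_isCompact_subset hanalytic ha
  have hL0 := (ha0.trans_le haL).ne'
  obtain ⟨ρ, hρ, hρL, hρc⟩ := exists_frostman_measure_of_isCompact hL hL0
  have hcode := (continuous_code c).measurable
  refine ⟨code c '' L, image_subset_iff.2 fun x hx => (hLA hx).1, hL.image (continuous_code c),
    ρ.map (code c), Measure.isProbabilityMeasure_map hcode.aemeasurable, ?_,
    isFrostman_map_code c ht (ENNReal.inv_ne_top.2 hL0) hρc⟩
  rw [Measure.map_apply hcode (hL.image (continuous_code c)).isClosed.measurableSet.compl]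
  exact measure_mono_null (fun x hx hxL => hx ⟨x, hxL, rfl⟩) hρL

/-! ### Potentials and energies -/

theorem rpow_neg_le_mul_rpow_neg {a b c : ℝ≥0∞} (hc0 : c ≠ 0) (hc : c ≠ ∞) {β : ℝ}
    (hβ : 0 ≤ β) (h : a ≤ c * b) : b ^ (-β) ≤ c ^ β * a ^ (-β) := by
  have hcβ0 : c ^ β ≠ 0 := by simp [ENNReal.rpow_eq_zero_iff, hc0, hc]
  have hcβ : c ^ β ≠ ∞ := by finiteness
  rw [ENNReal.rpow_neg, ENNReal.rpow_neg, ← ENNReal.inv_mul_le_iff hcβ0 hcβ,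
    ← ENNReal.mul_inv (.inl hcβ0) (.inl hcβ), ENNReal.inv_le_inv,
    ← ENNReal.mul_rpow_of_nonneg _ _ hβ]
  exact ENNReal.rpow_le_rpow h hβ

section Potential

open Filter Topology

theorem edist_rpow_neg_le_tsum {X : Type*} [PseudoMetricSpace X] (x y : X) {s : ℝ} (hs : 0 < s) :
    edist x y ^ (-s) ≤ 1 + ∑' k : ℕ, (closedBall x ((2⁻¹ : ℝ) ^ k)).indicator
      (fun _ => (2 : ℝ≥0∞) ^ s * ((2 : ℝ≥0∞) ^ s) ^ k) y := by
  rcases le_or_gt 1 (dist x y) with hfar | hnear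
  · refine le_add_right (ENNReal.rpow_le_one_of_one_le_of_neg ?_ (neg_lt_zero.2 hs))
    rwa [edist_dist, ENNReal.one_le_ofReal]
  refine le_add_left ?_
  have h2s : (1 : ℝ≥0∞) ≤ 2 ^ s := ENNReal.one_le_rpow one_le_two hs
  rcases dist_nonneg.eq_or_lt' (a := dist x y) with hxy | hxy
  · have hone (k : ℕ) : (1 : ℝ≥0∞) ≤ (closedBall x ((2⁻¹ : ℝ) ^ k)).indicator
        (fun _ => (2 : ℝ≥0∞) ^ s * ((2 : ℝ≥0∞) ^ s) ^ k) y := by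
      rw [indicator_of_mem (by rw [mem_closedBall, dist_comm, hxy]; positivity)]
      exact one_le_mul_of_one_le_of_one_le h2s (one_le_pow₀ h2s)
    calc edist x y ^ (-s) ≤ ∑' _ : ℕ, 1 :=
          le_top.trans_eq (ENNReal.tsum_const_eq_top_of_ne_zero one_ne_zero).symm
      _ ≤ _ := ENNReal.tsum_le_tsum hone
  · obtain ⟨k, hk, hk'⟩ := exists_nat_pow_near_of_lt_one hxy hnear.le (y := (2⁻¹ : ℝ))
      (by norm_num) (by norm_num)
    refine le_trans ?_ (ENNReal.le_tsum k)
    have hpow : ENNReal.ofReal ((2⁻¹ : ℝ) ^ (k + 1)) = ((2 : ℝ≥0∞) ^ (k + 1))⁻¹ := by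
      rw [inv_pow, ENNReal.ofReal_inv_of_pos (by positivity), ENNReal.ofReal_pow zero_le_two,
        ENNReal.ofReal_ofNat]
    rw [indicator_of_mem (by rwa [mem_closedBall, dist_comm]), ENNReal.rpow_neg, ← pow_succ',
      ← ENNReal.rpow_natCast, ← ENNReal.rpow_mul, mul_comm, ENNReal.rpow_mul, ENNReal.rpow_natCast,
      ENNReal.inv_le_iff_inv_le, ← ENNReal.inv_rpow, ← hpow, edist_dist]
    exact ENNReal.rpow_le_rpow (ENNReal.ofReal_le_ofReal hk.le) hs.le

section Pseudo

variable {X : Type*} [PseudoMetricSpace X] [MeasurableSpace X] [OpensMeasurableSpace X]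
  {μ : Measure X}

theorem lintegral_edist_rpow_neg_le_tsum (x : X) {s : ℝ} (hs : 0 < s) :
    ∫⁻ y, edist x y ^ (-s) ∂μ ≤
      μ univ + ∑' k : ℕ, (2 : ℝ≥0∞) ^ s * ((2 : ℝ≥0∞) ^ s) ^ k * μ (closedBall x (2⁻¹ ^ k)) := by
  refine (lintegral_mono fun y => edist_rpow_neg_le_tsum x y hs).trans_eq ?_
  rw [lintegral_add_left measurable_const, lintegral_one, lintegral_tsum]
  · simp only [lintegral_indicator isClosed_closedBall.measurableSet, setLIntegral_const]
  · exact fun k => (measurable_const.indicator isClosed_closedBall.measurableSet).aemeasurable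

theorem IsFrostman.exists_lintegral_edist_le [IsFiniteMeasure μ] {s t : ℝ} (hμ : IsFrostman μ t)
    (hs : 0 < s) (hst : s < t) :
    ∃ C : ℝ≥0∞, C ≠ ∞ ∧ ∀ x, ∫⁻ y, edist x y ^ (-s) ∂μ ≤ C := by
  obtain ⟨C, hC, h⟩ := hμ
  set q : ℝ≥0∞ := 2 ^ s * 2⁻¹ ^ t
  have hq : q < 1 := by
    rw [show q = 2 ^ s * 2⁻¹ ^ t from rfl, ENNReal.inv_rpow, ← ENNReal.rpow_neg,
      ← ENNReal.rpow_add _ _ (by simp) (by simp)]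
    exact ENNReal.rpow_lt_one_of_one_lt_of_neg (by simp) (by linarith)
  have hq' : (1 - q)⁻¹ ≠ ∞ := by simpa [tsub_eq_zero_iff_le] using hq
  refine ⟨μ univ + 2 ^ s * C * (1 - q)⁻¹, by finiteness, fun x => ?_⟩
  have hterm (k : ℕ) : (2 : ℝ≥0∞) ^ s * (2 ^ s) ^ k * μ (closedBall x (2⁻¹ ^ k)) ≤
      2 ^ s * C * q ^ k := by
    have hpow : ENNReal.ofReal ((2⁻¹ : ℝ) ^ k) ^ t = ((2⁻¹ : ℝ≥0∞) ^ t) ^ k := by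
      rw [ENNReal.ofReal_pow (by positivity), ENNReal.ofReal_inv_of_pos two_pos,
        ENNReal.ofReal_ofNat, ← ENNReal.rpow_natCast, ← ENNReal.rpow_natCast, ← ENNReal.rpow_mul,
        ← ENNReal.rpow_mul, mul_comm]
    calc (2 : ℝ≥0∞) ^ s * (2 ^ s) ^ k * μ (closedBall x (2⁻¹ ^ k))
        ≤ 2 ^ s * (2 ^ s) ^ k * (C * ENNReal.ofReal ((2⁻¹ : ℝ) ^ k) ^ t) := by
          gcongr
          exact h x _ (by positivity)
      _ = 2 ^ s * C * q ^ k := by rw [hpow, mul_pow]; ring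
  calc ∫⁻ y, edist x y ^ (-s) ∂μ ≤ μ univ + ∑' k : ℕ, 2 ^ s * C * q ^ k :=
        (lintegral_edist_rpow_neg_le_tsum x hs).trans
          (add_le_add le_rfl (ENNReal.tsum_le_tsum hterm))
    _ = _ := by rw [ENNReal.tsum_mul_left, ENNReal.tsum_geometric]

theorem measure_closedBall_le_of_lintegral_edist_le {β : ℝ} (hβ : 0 ≤ β) {x : X} {M : ℝ≥0∞}
    (h : ∫⁻ y, edist x y ^ (-β) ∂μ ≤ M) {r : ℝ} (hr : 0 < r) :
    μ (closedBall x r) ≤ M * ENNReal.ofReal r ^ β := by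
  have hr0 : ENNReal.ofReal r ^ β ≠ 0 := by simp [ENNReal.rpow_eq_zero_iff, hr]
  have hmarkov : ENNReal.ofReal r ^ (-β) * μ (closedBall x r) ≤ M := by
    rw [← setLIntegral_const]
    refine (setLIntegral_mono' isClosed_closedBall.measurableSet fun y hy => ?_).trans
      ((setLIntegral_le_lintegral _ _).trans h)
    rw [ENNReal.rpow_neg, ENNReal.rpow_neg, ENNReal.inv_le_inv, edist_comm, edist_dist]
    exact ENNReal.rpow_le_rpow (ENNReal.ofReal_le_ofReal hy) hβ
  rwa [ENNReal.rpow_neg, ENNReal.inv_mul_le_iff hr0 (by finiteness), mul_comm] at hmarkov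

end Pseudo

variable {X : Type*} [MetricSpace X] [MeasurableSpace X] [BorelSpace X] {μ : Measure X}

/-- The **mass distribution principle**. -/
theorem measure_le_mul_hausdorffMeasure {E : Set X} (hE : MeasurableSet E) {t : ℝ}
    {C : ℝ≥0∞} (hC0 : C ≠ 0) (hC : C ≠ ∞)
    (h : ∀ x ∈ E, ∀ r : ℝ, 0 < r → μ (closedBall x r) ≤ C * ENNReal.ofReal r ^ t) :
    μ E ≤ C * μH[t] E := by
  have hrestrict : C⁻¹ • μ.restrict E ≤ μH[t] := by
    refine Measure.le_hausdorffMeasure t _ 1 one_pos fun s hs => ?_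
    rw [Measure.smul_apply, smul_eq_mul, ENNReal.inv_mul_le_iff hC0 hC, Measure.restrict_apply' hE]
    rcases (s ∩ E).eq_empty_or_nonempty with he | ⟨x, hxs, hxE⟩
    · simp [he]
    have hd : ediam s ≠ ∞ := ne_top_of_le_ne_top ENNReal.one_ne_top hs
    have hbound (r : ℝ) (hr : (ediam s).toReal < r) : μ (s ∩ E) ≤ C * ENNReal.ofReal r ^ t := by
      refine (measure_mono fun y hy => ?_).trans (h x hxE r (ENNReal.toReal_nonneg.trans_lt hr))
      rw [mem_closedBall, dist_edist]
      exact (ENNReal.toReal_mono hd (edist_le_ediam_of_mem hy.1 hxs)).trans hr.le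
    have hlim : Tendsto (fun r : ℝ => C * ENNReal.ofReal r ^ t) (𝓝[>] (ediam s).toReal)
        (𝓝 (C * ENNReal.ofReal (ediam s).toReal ^ t)) :=
      tendsto_nhdsWithin_of_tendsto_nhds (ENNReal.Tendsto.const_mul
        ((ENNReal.continuous_rpow_const.comp ENNReal.continuous_ofReal).tendsto _) (.inr hC))
    rw [ENNReal.ofReal_toReal hd] at hlim
    exact ge_of_tendsto hlim (eventually_nhdsWithin_of_forall hbound)
  have hmeas := hrestrict E
  rwa [Measure.smul_apply, smul_eq_mul, ENNReal.inv_mul_le_iff hC0 hC,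
    Measure.restrict_apply_self] at hmeas

theorem le_dimH_of_forall_measure_closedBall_le {E : Set X} (hE : MeasurableSet E) (h0 : μ E ≠ 0)
    {β : ℝ} {M : ℝ≥0∞} (hM : M ≠ ∞)
    (h : ∀ x ∈ E, ∀ r : ℝ, 0 < r → μ (closedBall x r) ≤ M * ENNReal.ofReal r ^ β) :
    ENNReal.ofReal β ≤ dimH E := by
  rcases le_or_gt β 0 with hβ | hβ
  · simp [ENNReal.ofReal_of_nonpos hβ]
  refine le_dimH_of_hausdorffMeasure_ne_zero (d := β.toNNReal) fun hH => h0 ?_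
  rw [Real.coe_toNNReal _ hβ.le] at hH
  have hle := measure_le_mul_hausdorffMeasure (C := M + 1) hE (by simp) (by finiteness)
    fun x hx r hr => (h x hx r hr).trans (by gcongr; exact le_self_add)
  simpa [hH] using hle

theorem le_dimH_of_energy_ne_top [SecondCountableTopology X] [SFinite μ] {β : ℝ} (hβ : 0 ≤ β)
    (hμ : ∫⁻ x, ∫⁻ y, edist x y ^ (-β) ∂μ ∂μ ≠ ∞) {E : Set X} (hE : MeasurableSet E)
    (h0 : μ E ≠ 0) : ENNReal.ofReal β ≤ dimH E := by
  let φ (x : X) : ℝ≥0∞ := ∫⁻ y, edist x y ^ (-β) ∂μ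
  have hφ : Measurable φ := Measurable.lintegral_prod_right'
    (f := fun p : X × X => edist p.1 p.2 ^ (-β)) ((measurable_fst.edist measurable_snd).pow_const _)
  obtain ⟨M, hM⟩ : ∃ M : ℕ, μ (E ∩ {x | φ x ≤ M}) ≠ 0 := by
    by_contra! hnull
    refine h0 (measure_mono_null (t := (⋃ M : ℕ, E ∩ {x | φ x ≤ M}) ∪ {x | ¬ φ x < ∞}) ?_
      (measure_union_null (measure_iUnion_null hnull) (ae_iff.1 (ae_lt_top hφ hμ))))
    intro x hx
    by_cases hx' : φ x < ∞
    · obtain ⟨M, hM⟩ := ENNReal.exists_nat_gt hx'.ne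
      exact .inl (mem_iUnion.2 ⟨M, hx, hM.le⟩)
    · exact .inr hx'
  calc ENNReal.ofReal β ≤ dimH (E ∩ {x | φ x ≤ M}) :=
        le_dimH_of_forall_measure_closedBall_le (hE.inter (hφ measurableSet_Iic)) hM (by simp)
          fun x hx r hr => measure_closedBall_le_of_lintegral_edist_le hβ hx.2 hr
    _ ≤ dimH E := dimH_mono inter_subset_left

theorem IsFrostman.measure_eq_zero {t : ℝ} (hμ : IsFrostman μ t) {E : Set X}
    (hE : MeasurableSet E) (hd : dimH E < ENNReal.ofReal t) : μ E = 0 := by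
  obtain ⟨C, hC, h⟩ := hμ
  by_contra h0
  exact (le_dimH_of_forall_measure_closedBall_le hE h0 hC fun x _ => h x).not_gt hd

end Potential

theorem isFrostman_volume (ι : Type*) [Fintype ι] :
    IsFrostman (volume : Measure (ι → ℝ)) (Fintype.card ι) := by
  refine ⟨2 ^ Fintype.card ι, by finiteness, fun x r hr => ?_⟩
  rw [Real.volume_pi_closedBall _ hr.le, ENNReal.ofReal_pow (by positivity),
    ENNReal.ofReal_mul zero_le_two, mul_pow, ENNReal.rpow_natCast, ENNReal.ofReal_ofNat]

theorem IsFrostman.restrict {X : Type*} [PseudoMetricSpace X] [MeasurableSpace X] {μ : Measure X}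
    {t : ℝ} (hμ : IsFrostman μ t) (S : Set X) : IsFrostman (μ.restrict S) t := by
  obtain ⟨C, hC, h⟩ := hμ
  exact ⟨C, hC, fun x r hr => (Measure.restrict_apply_le _ _).trans (h x r hr)⟩

theorem dimH_hyperplane_le (m : ℕ) (c : ℝ) : dimH {x : Fin (m + 1) → ℝ | x 0 = c} ≤ m := by
  let f (y : Fin m → ℝ) : Fin (m + 1) → ℝ := Fin.cons c y
  have hf : LipschitzWith 1 f := by
    refine LipschitzWith.of_edist_le fun y z => edist_pi_le_iff.2 fun i => ?_
    refine Fin.cases (by simp [f]) (fun i => ?_) i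
    simpa [f] using edist_le_pi_edist y z i
  have hsubset : {x : Fin (m + 1) → ℝ | x 0 = c} ⊆ f '' univ := fun x (hx : x 0 = c) =>
    ⟨Fin.tail x, trivial, by simp [f, ← hx]⟩
  calc dimH {x : Fin (m + 1) → ℝ | x 0 = c} ≤ dimH (f '' univ) := dimH_mono hsubset
    _ ≤ dimH (univ : Set (Fin m → ℝ)) := hf.dimH_image_le univ
    _ = m := Real.dimH_univ_pi_fin m

/-! ### Projections along lines transversal to a hyperplane -/

/-- The projection of `ℝᵐ⁺¹` onto `ℝᵐ` along the direction `(1, v)`. -/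
def skewProj {m : ℕ} (v : Fin m → ℝ) (x : Fin (m + 1) → ℝ) : Fin m → ℝ := Fin.tail x - x 0 • v

section SkewProj

variable {m : ℕ}

theorem skewProj_sub (v : Fin m → ℝ) (x y : Fin (m + 1) → ℝ) :
    skewProj v (x - y) = skewProj v x - skewProj v y := by
  ext i
  simp only [skewProj, Fin.tail, Pi.sub_apply, Pi.smul_apply, smul_eq_mul]
  ring

theorem continuous_skewProj :
    Continuous fun p : (Fin m → ℝ) × (Fin (m + 1) → ℝ) => skewProj p.1 p.2 := by
  unfold skewProj Fin.tail
  fun_prop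

theorem norm_le_max_tail (z : Fin (m + 1) → ℝ) : ‖z‖ ≤ max |z 0| ‖Fin.tail z‖ := by
  refine (pi_norm_le_iff_of_nonneg (le_max_of_le_left (abs_nonneg _))).2 fun i => ?_
  refine Fin.cases (le_max_left _ _) (fun i => ?_) i
  exact (norm_le_pi_norm (Fin.tail z) i).trans (le_max_right _ _)

theorem norm_skewProj_le (v : Fin m → ℝ) (z : Fin (m + 1) → ℝ) :
    ‖skewProj v z‖ ≤ (1 + ‖v‖) * ‖z‖ := by
  have htail : ‖Fin.tail z‖ ≤ ‖z‖ :=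
    (pi_norm_le_iff_of_nonneg (norm_nonneg _)).2 fun i => norm_le_pi_norm z i.succ
  calc ‖skewProj v z‖ ≤ ‖Fin.tail z‖ + ‖z 0 • v‖ := norm_sub_le _ _
    _ = ‖Fin.tail z‖ + ‖z 0‖ * ‖v‖ := by rw [norm_smul]
    _ ≤ ‖z‖ + ‖z‖ * ‖v‖ := by gcongr; exact norm_le_pi_norm z 0
    _ = (1 + ‖v‖) * ‖z‖ := by ring

theorem norm_le_two_mul_norm_skewProj {R : ℝ} (hR : 1 ≤ R) {v : Fin m → ℝ} (hv : ‖v‖ ≤ R)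
    {z : Fin (m + 1) → ℝ} (hz : 2 * R * |z 0| ≤ ‖Fin.tail z‖) : ‖z‖ ≤ 2 * ‖skewProj v z‖ := by
  have htail : ‖Fin.tail z‖ ≤ ‖skewProj v z‖ + |z 0| * R :=
    calc ‖Fin.tail z‖ = ‖skewProj v z + z 0 • v‖ := by rw [skewProj, sub_add_cancel]
      _ ≤ ‖skewProj v z‖ + ‖z 0 • v‖ := norm_add_le _ _
      _ ≤ ‖skewProj v z‖ + |z 0| * R := by rw [norm_smul, Real.norm_eq_abs]; gcongr
  have hz0 : |z 0| ≤ ‖Fin.tail z‖ := by nlinarith [abs_nonneg (z 0)]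
  have hmax := norm_le_max_tail z
  rw [max_eq_right hz0] at hmax
  linarith

theorem norm_le_mul_abs_zero {R : ℝ} (hR : 1 ≤ R)
    {z : Fin (m + 1) → ℝ} (hz : ‖Fin.tail z‖ ≤ 2 * R * |z 0|) : ‖z‖ ≤ 2 * R * |z 0| :=
  (norm_le_max_tail z).trans (max_le (by nlinarith [abs_nonneg (z 0)]) hz)

theorem enorm_skewProj {z : Fin (m + 1) → ℝ} (hz : z 0 ≠ 0) (v : Fin m → ℝ) :
    ‖skewProj v z‖ₑ = ‖z 0‖ₑ * edist ((z 0)⁻¹ • Fin.tail z) v := by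
  rw [edist_eq_enorm_sub, ← enorm_smul, smul_sub, smul_inv_smul₀ hz, skewProj]

theorem lintegral_enorm_skewProj_le_of_le {β : ℝ} (hβ : 0 ≤ β) {R : ℝ} (hR : 1 ≤ R)
    {z : Fin (m + 1) → ℝ} (hz : 2 * R * |z 0| ≤ ‖Fin.tail z‖) :
    ∫⁻ v in closedBall 0 R, ‖skewProj v z‖ₑ ^ (-β) ≤
      2 ^ β * volume (closedBall (0 : Fin m → ℝ) R) * ‖z‖ₑ ^ (-β) := by
  calc ∫⁻ v in closedBall 0 R, ‖skewProj v z‖ₑ ^ (-β)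
      ≤ ∫⁻ _ in closedBall (0 : Fin m → ℝ) R, 2 ^ β * ‖z‖ₑ ^ (-β) := by
        refine setLIntegral_mono' isClosed_closedBall.measurableSet fun v hv =>
          rpow_neg_le_mul_rpow_neg two_ne_zero ENNReal.ofNat_ne_top hβ ?_
        rw [← ofReal_norm, ← ofReal_norm, ← ENNReal.ofReal_ofNat, ← ENNReal.ofReal_mul zero_le_two]
        exact ENNReal.ofReal_le_ofReal
          (norm_le_two_mul_norm_skewProj hR (mem_closedBall_zero_iff.1 hv) hz)
    _ = _ := by rw [setLIntegral_const]; ring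

theorem lintegral_enorm_skewProj_le_of_ge {β : ℝ} (hβ : 0 ≤ β) {R : ℝ} (hR : 1 ≤ R) {C : ℝ≥0∞}
    (hC : ∀ x : Fin m → ℝ, ∫⁻ v in closedBall 0 R, edist x v ^ (-β) ≤ C)
    {z : Fin (m + 1) → ℝ} (hz0 : z 0 ≠ 0) (hz : ‖Fin.tail z‖ ≤ 2 * R * |z 0|) :
    ∫⁻ v in closedBall 0 R, ‖skewProj v z‖ₑ ^ (-β) ≤
      ENNReal.ofReal (2 * R) ^ β * C * ‖z‖ₑ ^ (-β) := by
  calc ∫⁻ v in closedBall 0 R, ‖skewProj v z‖ₑ ^ (-β)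
      = ‖z 0‖ₑ ^ (-β) *
          ∫⁻ v in closedBall (0 : Fin m → ℝ) R, edist ((z 0)⁻¹ • Fin.tail z) v ^ (-β) := by
        rw [← lintegral_const_mul _ (by fun_prop)]
        simp only [enorm_skewProj hz0, ENNReal.mul_rpow_of_ne_top enorm_ne_top (edist_ne_top _ _)]
    _ ≤ ENNReal.ofReal (2 * R) ^ β * ‖z‖ₑ ^ (-β) * C := by
        gcongr
        · refine rpow_neg_le_mul_rpow_neg ?_ ENNReal.ofReal_ne_top hβ ?_
          · exact (ENNReal.ofReal_pos.2 (by linarith)).ne'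
          · rw [← ofReal_norm, ← ofReal_norm, ← ENNReal.ofReal_mul (by linarith)]
            exact ENNReal.ofReal_le_ofReal (norm_le_mul_abs_zero hR hz)
        · exact hC _
    _ = _ := by ring

theorem exists_lintegral_edist_skewProj_le {β : ℝ} (hβ : 0 < β) (hβm : β < m) {R : ℝ}
    (hR : 1 ≤ R) : ∃ C : ℝ≥0∞, C ≠ ∞ ∧ ∀ x y : Fin (m + 1) → ℝ,
      ∫⁻ v in closedBall 0 R, edist (skewProj v x) (skewProj v y) ^ (-β) ≤
        C * edist x y ^ (-β) := by
  have : IsFiniteMeasure (volume.restrict (closedBall (0 : Fin m → ℝ) R)) :=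
    ⟨by simpa using measure_closedBall_lt_top⟩
  obtain ⟨C, hC, hpot⟩ := ((isFrostman_volume (Fin m)).restrict
    (closedBall 0 R)).exists_lintegral_edist_le hβ (by simpa using hβm)
  have hV : volume (closedBall (0 : Fin m → ℝ) R) ≠ ∞ := measure_closedBall_lt_top.ne
  refine ⟨2 ^ β * volume (closedBall (0 : Fin m → ℝ) R) + ENNReal.ofReal (2 * R) ^ β * C,
    by finiteness, fun x y => ?_⟩
  simp only [edist_eq_enorm_sub, ← skewProj_sub, add_mul]
  rcases le_or_gt (2 * R * |(x - y) 0|) ‖Fin.tail (x - y)‖ with hz | hz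
  · exact le_add_right (lintegral_enorm_skewProj_le_of_le hβ.le hR hz)
  · have hz0 : (x - y) 0 ≠ 0 := fun h0 => by
      rw [h0, abs_zero, mul_zero] at hz
      exact hz.not_ge (norm_nonneg _)
    exact le_add_left (lintegral_enorm_skewProj_le_of_ge hβ.le hR hpot hz0 hz.le)

end SkewProj

/-! ### Cube kernels and their averaged correlations -/

section Kernels

variable {m : ℕ}

/-- The indicator function of the cube of side `2 * r` centred at the origin, normalized to have
integral one. Convolving with it is the approximate identity used to smooth projected measures. -/
noncomputable def cubeKernel (r : ℝ) : (Fin m → ℝ) → ℝ :=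
  (closedBall 0 r).indicator fun _ => ((2 * r) ^ m)⁻¹

/-- The difference of the cube kernels at two consecutive dyadic scales, which measures the change
in a smoothed quantity when the scale is halved. -/
noncomputable def diffKernel (r : ℝ) (q : Fin m → ℝ) : ℝ := cubeKernel (r / 2) q - cubeKernel r q

/-- A Lipschitz cut-off supported on a ball, used as the weight when averaging over the directions
of the skew projections. -/
noncomputable def tent (R : ℝ) (v : Fin m → ℝ) : ℝ := max 0 (R - ‖v‖)

theorem measurable_cubeKernel (r : ℝ) : Measurable (cubeKernel (m := m) r) :=
  measurable_const.indicator isClosed_closedBall.measurableSet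

theorem cubeKernel_nonneg {r : ℝ} (hr : 0 < r) (q : Fin m → ℝ) : 0 ≤ cubeKernel r q :=
  indicator_nonneg (fun _ _ => by positivity) q

theorem cubeKernel_le {r : ℝ} (hr : 0 < r) (q : Fin m → ℝ) : cubeKernel r q ≤ ((2 * r) ^ m)⁻¹ :=
  indicator_le_self' (fun _ _ => by positivity) q

theorem abs_cubeKernel_le {r : ℝ} (hr : 0 < r) (q : Fin m → ℝ) :
    |cubeKernel r q| ≤ ((2 * r) ^ m)⁻¹ := by
  rw [abs_of_nonneg (cubeKernel_nonneg hr q)]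
  exact cubeKernel_le hr q

theorem cubeKernel_eq_zero {r : ℝ} {q : Fin m → ℝ} (h : r < ‖q‖) : cubeKernel r q = 0 :=
  indicator_of_notMem (by simpa using h) _

theorem cubeKernel_neg (r : ℝ) (q : Fin m → ℝ) : cubeKernel r (-q) = cubeKernel r q := by
  simp [cubeKernel, indicator]

theorem integrable_cubeKernel (r : ℝ) : Integrable (cubeKernel (m := m) r) :=
  (integrable_indicator_iff isClosed_closedBall.measurableSet).2
    (integrableOn_const measure_closedBall_lt_top.ne)

theorem integral_cubeKernel {r : ℝ} (hr : 0 < r) : ∫ q, cubeKernel (m := m) r q = 1 := by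
  rw [cubeKernel, integral_indicator_const _ isClosed_closedBall.measurableSet, measureReal_def,
    Real.volume_pi_closedBall _ hr.le, ENNReal.toReal_ofReal (by positivity), Fintype.card_fin,
    smul_eq_mul, mul_inv_cancel₀ (by positivity)]

theorem cubeKernel_sub_smul {r z : ℝ} (hz : z ≠ 0) (c v : Fin m → ℝ) :
    cubeKernel r (c - z • v) = (|z| ^ m)⁻¹ * cubeKernel (r / |z|) (z⁻¹ • c - v) := by
  have hz' : 0 < |z| := abs_pos.2 hz
  have hmem : c - z • v ∈ closedBall (0 : Fin m → ℝ) r ↔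
      z⁻¹ • c - v ∈ closedBall (0 : Fin m → ℝ) (r / |z|) := by
    rw [mem_closedBall_zero_iff, mem_closedBall_zero_iff, le_div_iff₀' hz', ← Real.norm_eq_abs,
      ← norm_smul, smul_sub, smul_inv_smul₀ hz]
  by_cases hc : c - z • v ∈ closedBall (0 : Fin m → ℝ) r
  · rw [cubeKernel, cubeKernel, indicator_of_mem hc, indicator_of_mem (hmem.1 hc), ← mul_inv,
      ← mul_pow]
    congr 2
    field_simp
  · rw [cubeKernel, cubeKernel, indicator_of_notMem hc, indicator_of_notMem (hmem.not.1 hc),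
      mul_zero]

theorem measurable_diffKernel (r : ℝ) : Measurable (diffKernel (m := m) r) :=
  (measurable_cubeKernel _).sub (measurable_cubeKernel _)

theorem integrable_diffKernel (r : ℝ) : Integrable (diffKernel (m := m) r) :=
  (integrable_cubeKernel _).sub (integrable_cubeKernel _)

theorem abs_diffKernel_le {r : ℝ} (hr : 0 < r) (q : Fin m → ℝ) : |diffKernel r q| ≤ (r ^ m)⁻¹ := by
  have hhalf : cubeKernel (r / 2) q ≤ (r ^ m)⁻¹ := by
    simpa only [mul_div_cancel₀ r (two_ne_zero' ℝ)] using cubeKernel_le (half_pos hr) q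
  have hfull : cubeKernel r q ≤ (r ^ m)⁻¹ :=
    (cubeKernel_le hr q).trans (by gcongr; linarith)
  exact abs_sub_le_of_nonneg_of_le (cubeKernel_nonneg (half_pos hr) q) hhalf
    (cubeKernel_nonneg hr q) hfull

theorem integral_abs_diffKernel_le {r : ℝ} (hr : 0 < r) :
    ∫ q, |diffKernel (m := m) r q| ≤ 2 := by
  calc ∫ q, |diffKernel (m := m) r q| ≤ ∫ q, (cubeKernel (m := m) (r / 2) q + cubeKernel r q) := by
        refine integral_mono (integrable_diffKernel r).abs
          ((integrable_cubeKernel _).add (integrable_cubeKernel _)) fun q => ?_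
        refine (abs_sub _ _).trans_eq ?_
        rw [abs_of_nonneg (cubeKernel_nonneg (half_pos hr) q),
          abs_of_nonneg (cubeKernel_nonneg hr q)]
    _ = 2 := by
        rw [integral_add (integrable_cubeKernel _) (integrable_cubeKernel _),
          integral_cubeKernel (half_pos hr), integral_cubeKernel hr]
        norm_num

theorem diffKernel_eq_zero {r : ℝ} (hr : 0 < r) {q : Fin m → ℝ} (h : r < ‖q‖) :
    diffKernel r q = 0 := by
  rw [diffKernel, cubeKernel_eq_zero h, cubeKernel_eq_zero (by linarith), sub_zero]

theorem continuous_tent (R : ℝ) : Continuous (tent (m := m) R) := by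
  unfold tent; fun_prop

theorem tent_nonneg (R : ℝ) (v : Fin m → ℝ) : 0 ≤ tent R v := le_max_left _ _

theorem tent_le {R : ℝ} (hR : 0 ≤ R) (v : Fin m → ℝ) : tent R v ≤ R :=
  max_le hR (by linarith [norm_nonneg v])

theorem tent_eq_zero {R : ℝ} {v : Fin m → ℝ} (h : v ∉ closedBall 0 R) : tent R v = 0 :=
  max_eq_left (by linarith [lt_of_not_ge (mt mem_closedBall_zero_iff.2 h)])

theorem abs_tent_sub_le (R : ℝ) (v a : Fin m → ℝ) : |tent R v - tent R a| ≤ ‖a - v‖ := by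
  calc |tent R v - tent R a| ≤ |(R - ‖v‖) - (R - ‖a‖)| := by
        simp only [tent, max_comm (0 : ℝ)]
        exact abs_max_sub_max_le_abs _ _ _
    _ = |‖a‖ - ‖v‖| := by rw [sub_sub_sub_cancel_left]
    _ ≤ ‖a - v‖ := abs_norm_sub_norm_le _ _

theorem integrable_tent (R : ℝ) : Integrable (tent (m := m) R) :=
  (continuous_tent R).integrable_of_hasCompactSupport
    (.intro (isCompact_closedBall 0 R) fun _ => tent_eq_zero)

theorem integrable_tent_mul {R c : ℝ} {g : (Fin m → ℝ) → ℝ} (hg : Measurable g)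
    (hgc : ∀ v, |g v| ≤ c) : Integrable fun v => tent R v * g v :=
  (integrable_tent R).mul_bdd hg.aestronglyMeasurable (.of_forall hgc)

theorem abs_integral_tent_mul_sub_le (R : ℝ) {ρ : ℝ} (hρ : 0 < ρ) (a : Fin m → ℝ) :
    |(∫ v, tent R v * cubeKernel ρ (a - v)) - tent R a| ≤ ρ := by
  have hk : Integrable fun v => cubeKernel ρ (a - v) := (integrable_cubeKernel ρ).comp_sub_left a
  have hone : ∫ v, cubeKernel ρ (a - v) = 1 := by
    rw [integral_sub_left_eq_self (cubeKernel ρ) volume a, integral_cubeKernel hρ]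
  have htk : Integrable fun v => tent R v * cubeKernel ρ (a - v) :=
    integrable_tent_mul ((measurable_cubeKernel ρ).comp (by fun_prop))
      fun _ => abs_cubeKernel_le hρ _
  calc |(∫ v, tent R v * cubeKernel ρ (a - v)) - tent R a|
      = |∫ v, (tent R v - tent R a) * cubeKernel ρ (a - v)| := by
        simp only [sub_mul]
        rw [integral_sub htk (hk.const_mul _), integral_const_mul, hone, mul_one]
    _ ≤ ∫ v, ρ * cubeKernel ρ (a - v) := by
        rw [← Real.norm_eq_abs]
        refine norm_integral_le_of_norm_le (hk.const_mul ρ) (.of_forall fun v => ?_)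
        rw [norm_mul, Real.norm_of_nonneg (cubeKernel_nonneg hρ _), Real.norm_eq_abs]
        rcases lt_or_ge ρ ‖a - v‖ with hv | hv
        · simp [cubeKernel_eq_zero hv]
        · exact mul_le_mul_of_nonneg_right ((abs_tent_sub_le R v a).trans hv)
            (cubeKernel_nonneg hρ _)
    _ = ρ := by rw [integral_const_mul, hone, mul_one]

theorem abs_integral_tent_mul_cubeKernel_sub_le (R : ℝ) {r z : ℝ} (hr : 0 < r) (hz : z ≠ 0)
    (c : Fin m → ℝ) :
    |(∫ v, tent R v * cubeKernel r (c - z • v)) - (|z| ^ m)⁻¹ * tent R (z⁻¹ • c)| ≤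
      (|z| ^ m)⁻¹ * (r / |z|) := by
  have : 0 < |z| := abs_pos.2 hz
  simp only [cubeKernel_sub_smul hz, mul_left_comm (tent R _)]
  rw [integral_const_mul, ← mul_sub, abs_mul, abs_of_nonneg (by positivity : 0 ≤ (|z| ^ m)⁻¹)]
  gcongr
  exact abs_integral_tent_mul_sub_le R (by positivity) _

theorem abs_integral_mul_le {f g : (Fin m → ℝ) → ℝ} (hf : Integrable f) {c : ℝ}
    (hg : ∀ q, |g q| ≤ c) : |∫ q, f q * g q| ≤ (∫ q, |f q|) * c := by
  rw [← integral_mul_const, ← Real.norm_eq_abs]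
  refine norm_integral_le_of_norm_le (hf.abs.mul_const c) (.of_forall fun q => ?_)
  rw [norm_mul]
  exact mul_le_mul_of_nonneg_left (hg q) (abs_nonneg _)

/-- The correlation of two kernels: if `X` and `Y` are smoothed by `f` and `g` respectively, the
overlap of the smoothed quantities depends on `X - Y` through `correlation f g`. -/
noncomputable def correlation (f g : (Fin m → ℝ) → ℝ) (a : Fin m → ℝ) : ℝ := ∫ q, f q * g (q + a)

/-- The correlation of two kernels at the skew projections of `z`, averaged over the direction of
projection. -/
noncomputable def avgCorrelation (R : ℝ) (f g : (Fin m → ℝ) → ℝ) (z : Fin (m + 1) → ℝ) : ℝ :=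
  ∫ v, tent R v * correlation f g (skewProj v z)

theorem correlation_cubeKernel_comm (r ρ : ℝ) (a : Fin m → ℝ) :
    correlation (cubeKernel r) (cubeKernel ρ) a = correlation (cubeKernel ρ) (cubeKernel r) a := by
  unfold correlation
  rw [← integral_sub_left_eq_self _ volume (-a)]
  congr with q
  rw [show -a - q = -(q + a) by abel, cubeKernel_neg, show -(q + a) + a = -q by abel,
    cubeKernel_neg, mul_comm]

section Fubini

variable {f g : (Fin m → ℝ) → ℝ} {c : ℝ}

theorem integrable_mul_tent_mul (R : ℝ) (hf : Integrable f) (hg : Measurable g)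
    (hgc : ∀ q, |g q| ≤ c) (z : Fin (m + 1) → ℝ) :
    Integrable (fun p : (Fin m → ℝ) × (Fin m → ℝ) =>
      f p.1 * (tent R p.2 * g (p.1 + Fin.tail z - z 0 • p.2))) (volume.prod volume) := by
  simp only [← mul_assoc]
  exact (hf.mul_prod (integrable_tent R)).mul_bdd (hg.comp (by fun_prop)).aestronglyMeasurable
    (.of_forall fun _ => hgc _)

theorem avgCorrelation_eq (R : ℝ) (hf : Integrable f) (hg : Measurable g) (hgc : ∀ q, |g q| ≤ c)
    (z : Fin (m + 1) → ℝ) :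
    avgCorrelation R f g z = ∫ q, f q * ∫ v, tent R v * g (q + Fin.tail z - z 0 • v) := by
  simp only [← integral_const_mul]
  rw [integral_integral_swap (integrable_mul_tent_mul R hf hg hgc z)]
  simp only [avgCorrelation, correlation, skewProj, ← integral_const_mul, add_sub_assoc,
    mul_left_comm (tent R _)]

theorem integrable_mul_integral_tent_mul (R : ℝ) (hf : Integrable f) (hg : Measurable g)
    (hgc : ∀ q, |g q| ≤ c) (z : Fin (m + 1) → ℝ) :
    Integrable fun q => f q * ∫ v, tent R v * g (q + Fin.tail z - z 0 • v) := by
  simpa only [integral_const_mul] using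
    (integrable_mul_tent_mul R hf hg hgc z).integral_prod_left

end Fubini

theorem abs_avgCorrelation_le (R : ℝ) {r : ℝ} (hr : 0 < r) (z : Fin (m + 1) → ℝ) :
    |avgCorrelation R (diffKernel r) (diffKernel r) z| ≤
      2 * (∫ v, tent (m := m) R v) * (r ^ m)⁻¹ := by
  have hcorr : ∀ a : Fin m → ℝ, |correlation (diffKernel r) (diffKernel r) a| ≤ 2 * (r ^ m)⁻¹ :=
    fun a => (abs_integral_mul_le (integrable_diffKernel r) fun q => abs_diffKernel_le hr _).trans
      (by gcongr; exact integral_abs_diffKernel_le hr)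
  refine (abs_integral_mul_le (integrable_tent R) fun v => hcorr (skewProj v z)).trans_eq ?_
  simp only [abs_of_nonneg (tent_nonneg R _)]
  ring

theorem abs_avgCorrelation_le_of_ne_zero (R : ℝ) {r : ℝ} (hr : 0 < r)
    {z : Fin (m + 1) → ℝ} (hz : z 0 ≠ 0) :
    |avgCorrelation R (diffKernel r) (diffKernel r) z| ≤ 4 * r * (|z 0| ^ (m + 1))⁻¹ := by
  have : 0 < |z 0| := abs_pos.2 hz
  have hi : ∀ ρ : ℝ, 0 < ρ → ∀ b, Integrable fun v : Fin m → ℝ =>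
      tent R v * cubeKernel ρ (b - z 0 • v) := fun ρ hρ b =>
    integrable_tent_mul ((measurable_cubeKernel ρ).comp (by fun_prop))
      fun _ => abs_cubeKernel_le hρ _
  have hinner : ∀ q, |∫ v, tent R v * diffKernel r (q + Fin.tail z - z 0 • v)| ≤
      2 * ((|z 0| ^ m)⁻¹ * (r / |z 0|)) := fun q => by
    simp only [diffKernel, mul_sub]
    rw [integral_sub (hi _ (half_pos hr) _) (hi _ hr _)]
    have hhalf : (|z 0| ^ m)⁻¹ * (r / 2 / |z 0|) ≤ (|z 0| ^ m)⁻¹ * (r / |z 0|) := by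
      gcongr; linarith
    rw [← sub_sub_sub_cancel_right _ _ ((|z 0| ^ m)⁻¹ * tent R ((z 0)⁻¹ • (q + Fin.tail z))),
      two_mul]
    exact (abs_sub _ _).trans (add_le_add
      ((abs_integral_tent_mul_cubeKernel_sub_le R (half_pos hr) hz _).trans hhalf)
      (abs_integral_tent_mul_cubeKernel_sub_le R hr hz _))
  rw [avgCorrelation_eq R (integrable_diffKernel r) (measurable_diffKernel r)
    (abs_diffKernel_le hr)]
  calc |∫ q, diffKernel r q * ∫ v, tent R v * diffKernel r (q + Fin.tail z - z 0 • v)|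
      ≤ (∫ q, |diffKernel r q|) * (2 * ((|z 0| ^ m)⁻¹ * (r / |z 0|))) :=
        abs_integral_mul_le (integrable_diffKernel r) hinner
    _ ≤ 2 * (2 * ((|z 0| ^ m)⁻¹ * (r / |z 0|))) := by
        gcongr; exact integral_abs_diffKernel_le hr
    _ = 4 * r * (|z 0| ^ (m + 1))⁻¹ := by rw [pow_succ, mul_inv]; ring

theorem avgCorrelation_eq_zero {R : ℝ} (hR : 1 ≤ R) {r : ℝ} (hr : 0 < r) {z : Fin (m + 1) → ℝ}
    (hz : 2 * R * |z 0| ≤ ‖Fin.tail z‖) (hzr : 4 * r < ‖z‖) :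
    avgCorrelation R (diffKernel r) (diffKernel r) z = 0 := by
  refine integral_eq_zero_of_ae (.of_forall fun v => mul_eq_zero.2 ?_)
  by_cases hv : v ∈ closedBall 0 R
  · refine .inr (integral_eq_zero_of_ae (.of_forall fun q => mul_eq_zero.2 ?_))
    have hproj : ‖z‖ ≤ 2 * ‖skewProj v z‖ :=
      norm_le_two_mul_norm_skewProj hR (mem_closedBall_zero_iff.1 hv) hz
    rcases lt_or_ge r ‖q‖ with hq | hq
    · exact .inl (diffKernel_eq_zero hr hq)
    · have htri : ‖skewProj v z‖ ≤ ‖q + skewProj v z‖ + ‖q‖ := by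
        simpa only [add_sub_cancel_left] using norm_sub_le (q + skewProj v z) q
      exact .inr (diffKernel_eq_zero hr (by linarith))
  · exact .inl (tent_eq_zero hv)

theorem abs_avgCorrelation_le_of_norm_le (R : ℝ) {r s : ℝ} (hr : 0 < r) (hs : 0 ≤ s)
    {z : Fin (m + 1) → ℝ} (hz : z ≠ 0) (hzr : ‖z‖ ≤ 4 * r) :
    |avgCorrelation R (diffKernel r) (diffKernel r) z| ≤
      2 * (∫ v, tent (m := m) R v) * 4 ^ s * (r ^ (s - m) * ‖z‖ ^ (-s)) := by
  have hI : 0 ≤ ∫ v, tent (m := m) R v := integral_nonneg fun v => tent_nonneg R v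
  calc |avgCorrelation R (diffKernel r) (diffKernel r) z|
      ≤ 2 * (∫ v, tent (m := m) R v) * (r ^ m)⁻¹ := abs_avgCorrelation_le R hr z
    _ = 2 * (∫ v, tent (m := m) R v) * 4 ^ s * (r ^ (s - m) * (4 * r) ^ (-s)) := by
        rw [Real.mul_rpow (by norm_num) hr.le, Real.rpow_sub hr, Real.rpow_neg (by norm_num),
          Real.rpow_neg hr.le, Real.rpow_natCast]
        field_simp
    _ ≤ 2 * (∫ v, tent (m := m) R v) * 4 ^ s * (r ^ (s - m) * ‖z‖ ^ (-s)) := by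
        have hrpow : (4 * r) ^ (-s) ≤ ‖z‖ ^ (-s) :=
          Real.rpow_le_rpow_of_nonpos (norm_pos_iff.2 hz) hzr (neg_nonpos.2 hs)
        gcongr

theorem mul_inv_pow_succ_le {r x s : ℝ} (hr : 0 < r) (hrx : r ≤ x) (hs : s ≤ m + 1) :
    r * (x ^ (m + 1))⁻¹ ≤ r ^ (s - m) * x ^ (-s) := by
  have hx : 0 < x := hr.trans_le hrx
  have hrs : r = r ^ (s - m) * r ^ (m + 1 - s) := by
    rw [← Real.rpow_add hr]; simp
  calc r * (x ^ (m + 1))⁻¹ = r ^ (s - m) * (r ^ (m + 1 - s) * (x ^ (m + 1))⁻¹) := by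
        rw [← mul_assoc, ← hrs]
    _ ≤ r ^ (s - m) * (x ^ (m + 1 - s) * (x ^ (m + 1))⁻¹) := by
        gcongr
    _ = r ^ (s - m) * x ^ (-s) := by
        rw [← Real.rpow_natCast, ← Real.rpow_neg hx.le, ← Real.rpow_add hx]
        congr 2
        push_cast
        ring

theorem abs_avgCorrelation_le_of_norm_ge {R : ℝ} (hR : 1 ≤ R) {r s : ℝ} (hr : 0 < r)
    (hs : s ≤ m + 1) {z : Fin (m + 1) → ℝ} (hzr : 4 * r < ‖z‖) :
    |avgCorrelation R (diffKernel r) (diffKernel r) z| ≤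
      4 * (2 * R) ^ (m + 1) * (r ^ (s - m) * ‖z‖ ^ (-s)) := by
  rcases le_total (2 * R * |z 0|) ‖Fin.tail z‖ with hcase | hcase
  · rw [avgCorrelation_eq_zero hR hr hcase hzr, abs_zero]
    positivity
  have hz : ‖z‖ ≤ 2 * R * |z 0| := norm_le_mul_abs_zero hR hcase
  have hz_pos : 0 < ‖z‖ := by linarith
  have hz0 : 0 < |z 0| := pos_of_mul_pos_right (hz_pos.trans_le hz) (by positivity)
  calc |avgCorrelation R (diffKernel r) (diffKernel r) z|
      ≤ 4 * r * (|z 0| ^ (m + 1))⁻¹ := abs_avgCorrelation_le_of_ne_zero R hr (abs_pos.1 hz0)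
    _ = 4 * (2 * R) ^ (m + 1) * (r * ((2 * R * |z 0|) ^ (m + 1))⁻¹) := by
        rw [mul_pow (2 * R)]
        field_simp
    _ ≤ 4 * (2 * R) ^ (m + 1) * (r * (‖z‖ ^ (m + 1))⁻¹) := by
        gcongr
    _ ≤ 4 * (2 * R) ^ (m + 1) * (r ^ (s - m) * ‖z‖ ^ (-s)) := by
        have hscale := mul_inv_pow_succ_le hr (by linarith : r ≤ ‖z‖) hs
        exact mul_le_mul_of_nonneg_left hscale (by positivity)

theorem exists_abs_avgCorrelation_le {R : ℝ} (hR : 1 ≤ R) {s : ℝ} (hs₀ : 0 ≤ s)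
    (hs₁ : s ≤ m + 1) :
    ∃ C : ℝ, 0 ≤ C ∧ ∀ r : ℝ, 0 < r → ∀ z : Fin (m + 1) → ℝ, z ≠ 0 →
      |avgCorrelation R (diffKernel r) (diffKernel r) z| ≤ C * (r ^ (s - m) * ‖z‖ ^ (-s)) := by
  have hI : 0 ≤ ∫ v, tent (m := m) R v := integral_nonneg fun v => tent_nonneg R v
  refine ⟨2 * (∫ v, tent (m := m) R v) * 4 ^ s + 4 * (2 * R) ^ (m + 1), by positivity,
    fun r hr z hz => ?_⟩
  rw [add_mul]
  rcases le_or_gt ‖z‖ (4 * r) with hzr | hzr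
  · exact (abs_avgCorrelation_le_of_norm_le R hr hs₀ hz hzr).trans
      (le_add_of_nonneg_right (by positivity))
  · exact (abs_avgCorrelation_le_of_norm_ge hR hr hs₁ hzr).trans
      (le_add_of_nonneg_left (by positivity))

theorem le_integral_tent_mul_cubeKernel {R r z : ℝ} (hr : 0 < r) (hz : z ≠ 0) {c : Fin m → ℝ}
    (hc : ‖c‖ + r ≤ (R - 1) * |z|) :
    (|z| ^ m)⁻¹ ≤ ∫ v, tent R v * cubeKernel r (c - z • v) := by
  have hz' : 0 < |z| := abs_pos.2 hz
  have htent : 1 + r / |z| ≤ tent R (z⁻¹ • c) := by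
    refine le_max_of_le_right ?_
    have hle : ‖c‖ / |z| + r / |z| ≤ R - 1 := by rwa [← add_div, div_le_iff₀ hz']
    rw [norm_smul, norm_inv, Real.norm_eq_abs, inv_mul_eq_div]
    linarith
  have hmul : (|z| ^ m)⁻¹ + (|z| ^ m)⁻¹ * (r / |z|) ≤ (|z| ^ m)⁻¹ * tent R (z⁻¹ • c) := by
    rw [← mul_one_add]
    gcongr
  linarith [(abs_le.1 (abs_integral_tent_mul_cubeKernel_sub_le R hr hz c)).1]

theorem le_avgCorrelation_cubeKernel {R r : ℝ} (hr : 0 < r) {z : Fin (m + 1) → ℝ}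
    (hz : z 0 ≠ 0) (hR : ‖Fin.tail z‖ + 2 * r ≤ (R - 1) * |z 0|) :
    (|z 0| ^ m)⁻¹ ≤ avgCorrelation R (cubeKernel r) (cubeKernel r) z := by
  rw [avgCorrelation_eq R (integrable_cubeKernel r) (measurable_cubeKernel r)
    (abs_cubeKernel_le hr)]
  calc (|z 0| ^ m)⁻¹ = ∫ q : Fin m → ℝ, cubeKernel r q * (|z 0| ^ m)⁻¹ := by
        rw [integral_mul_const, integral_cubeKernel hr, one_mul]
    _ ≤ ∫ q, cubeKernel r q * ∫ v, tent R v * cubeKernel r (q + Fin.tail z - z 0 • v) := by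
        refine integral_mono ((integrable_cubeKernel r).mul_const _)
          (integrable_mul_integral_tent_mul R (integrable_cubeKernel r) (measurable_cubeKernel r)
            (abs_cubeKernel_le hr) z) fun q => ?_
        rcases lt_or_ge r ‖q‖ with hq | hq
        · simp [cubeKernel_eq_zero hq]
        · refine mul_le_mul_of_nonneg_left (le_integral_tent_mul_cubeKernel hr hz ?_)
            (cubeKernel_nonneg hr q)
          linarith [norm_add_le q (Fin.tail z)]

end Kernels

/-! ### Smoothed projections of measures -/

theorem integrable_mul_mul_of_abs_le {Ω : Type*} [MeasurableSpace Ω] {κ : Measure Ω}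
    [IsFiniteMeasure κ] {a F G : Ω → ℝ} (ha : Measurable a) (hF : Measurable F)
    (hG : Measurable G) {A c d : ℝ} (hA : ∀ ω, |a ω| ≤ A) (hc : ∀ ω, |F ω| ≤ c)
    (hd : ∀ ω, |G ω| ≤ d) : Integrable (fun ω => a ω * F ω * G ω) κ := by
  refine .of_bound ((ha.mul hF).mul hG).aestronglyMeasurable (A * c * d) (.of_forall fun ω => ?_)
  have : 0 ≤ A := (abs_nonneg _).trans (hA ω)
  have : 0 ≤ c := (abs_nonneg _).trans (hc ω)
  simp only [norm_mul, Real.norm_eq_abs]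
  gcongr
  exacts [hA ω, hc ω, hd ω]

theorem integral_mul_integral_mul_integral {X Y Ω : Type*} [MeasurableSpace X]
    [MeasurableSpace Y] [MeasurableSpace Ω] (μ : Measure X) (ν : Measure Y) (κ : Measure Ω)
    [IsFiniteMeasure μ] [IsFiniteMeasure ν] [IsFiniteMeasure κ] {a : Ω → ℝ} {p : X → Ω → ℝ}
    {q : Y → Ω → ℝ} (ha : Measurable a) (hp : Measurable (Function.uncurry p))
    (hq : Measurable (Function.uncurry q)) {A P Q : ℝ} (hA : ∀ ω, |a ω| ≤ A)
    (hP : ∀ x ω, |p x ω| ≤ P) (hQ : ∀ y ω, |q y ω| ≤ Q) :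
    ∫ ω, a ω * (∫ x, p x ω ∂μ) * (∫ y, q y ω ∂ν) ∂κ =
      ∫ z : X × Y, ∫ ω, a ω * p z.1 ω * q z.2 ω ∂κ ∂(μ.prod ν) := by
  have hint : Integrable (fun t : Ω × (X × Y) => a t.1 * p t.2.1 t.1 * q t.2.2 t.1)
      (κ.prod (μ.prod ν)) :=
    integrable_mul_mul_of_abs_le (ha.comp measurable_fst)
      (hp.comp ((measurable_fst.comp measurable_snd).prodMk measurable_fst))
      (hq.comp ((measurable_snd.comp measurable_snd).prodMk measurable_fst))
      (fun _ => hA _) (fun _ => hP _ _) (fun _ => hQ _ _)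
  rw [← integral_integral_swap hint]
  congr with ω
  simp only [mul_assoc]
  rw [integral_const_mul, ← integral_prod_mul]

section Smoothing

variable {m : ℕ}

/-- Lebesgue measure on the product of the closed ball of radius `R`, in which the directions of
the skew projections lie, and the closed ball of radius `D`, in which the projected points lie. -/
noncomputable def cubeMeasure (m : ℕ) (R D : ℝ) : Measure ((Fin m → ℝ) × (Fin m → ℝ)) :=
  (volume.restrict (closedBall 0 R)).prod (volume.restrict (closedBall 0 D))

instance (R : ℝ) : IsFiniteMeasure (volume.restrict (closedBall (0 : Fin m → ℝ) R)) :=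
  ⟨by simpa using measure_closedBall_lt_top⟩

instance (R D : ℝ) : IsFiniteMeasure (cubeMeasure m R D) := by
  unfold cubeMeasure; infer_instance

/-- The value at `p.2` of the convolution with `f` of the image, under the skew projection in the
direction `p.1`, of the restriction of `μ` to the section `{x | (x, p.1) ∈ H}`. -/
noncomputable def smoothedProj (f : (Fin m → ℝ) → ℝ) (μ : Measure (Fin (m + 1) → ℝ))
    (H : Set ((Fin (m + 1) → ℝ) × (Fin m → ℝ))) (p : (Fin m → ℝ) × (Fin m → ℝ)) : ℝ :=
  ∫ x, H.indicator 1 (x, p.1) * f (p.2 - skewProj p.1 x) ∂μ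

/-- The average over directions, with weight `tent R`, of the `L²` inner product of the smoothed
projections of `μ` and `ν`. -/
noncomputable def pairing (R D : ℝ) (f g : (Fin m → ℝ) → ℝ) (μ ν : Measure (Fin (m + 1) → ℝ))
    (H H' : Set ((Fin (m + 1) → ℝ) × (Fin m → ℝ))) : ℝ :=
  ∫ p, tent R p.1 * smoothedProj f μ H p * smoothedProj g ν H' p ∂(cubeMeasure m R D)

variable {f g : (Fin m → ℝ) → ℝ} {μ ν : Measure (Fin (m + 1) → ℝ)} {R S D c d : ℝ}
  {H H' : Set ((Fin (m + 1) → ℝ) × (Fin m → ℝ))}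

theorem abs_indicator_one_mul_le {α : Type*} (s : Set α) (a : α) {b c : ℝ} (h : |b| ≤ c) :
    |s.indicator 1 a * b| ≤ c := by
  by_cases ha : a ∈ s
  · simpa [ha] using h
  · simpa [ha] using (abs_nonneg b).trans h

theorem abs_tent_le (hR : 0 ≤ R) (v : Fin m → ℝ) : |tent R v| ≤ R :=
  (abs_of_nonneg (tent_nonneg R v)).trans_le (tent_le hR v)

theorem measurable_tent_fst (R : ℝ) :
    Measurable fun p : (Fin m → ℝ) × (Fin m → ℝ) => tent R p.1 :=
  (continuous_tent R).measurable.comp measurable_fst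

theorem measurable_indicator_mul_sub_skewProj (hf : Measurable f) (hH : MeasurableSet H) :
    Measurable (Function.uncurry fun (x : Fin (m + 1) → ℝ) (p : (Fin m → ℝ) × (Fin m → ℝ)) =>
      H.indicator (1 : (Fin (m + 1) → ℝ) × (Fin m → ℝ) → ℝ) (x, p.1) *
        f (p.2 - skewProj p.1 x)) := by
  have hind : Measurable fun t : (Fin (m + 1) → ℝ) × ((Fin m → ℝ) × (Fin m → ℝ)) =>
      H.indicator (1 : (Fin (m + 1) → ℝ) × (Fin m → ℝ) → ℝ) (t.1, t.2.1) :=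
    (measurable_one.indicator hH).comp (measurable_fst.prodMk (measurable_fst.comp measurable_snd))
  have hsub : Measurable fun t : (Fin (m + 1) → ℝ) × ((Fin m → ℝ) × (Fin m → ℝ)) =>
      t.2.2 - skewProj t.2.1 t.1 :=
    (measurable_snd.comp measurable_snd).sub (continuous_skewProj.measurable.comp
      ((measurable_fst.comp measurable_snd).prodMk measurable_fst))
  exact hind.mul (hf.comp hsub)

theorem integrable_indicator_mul_sub_skewProj [IsFiniteMeasure μ] (hf : Measurable f)
    (hc : ∀ q, |f q| ≤ c) (hH : MeasurableSet H) (p : (Fin m → ℝ) × (Fin m → ℝ)) :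
    Integrable (fun x => H.indicator 1 (x, p.1) * f (p.2 - skewProj p.1 x)) μ :=
  .of_bound ((measurable_indicator_mul_sub_skewProj hf hH).comp
    (measurable_id.prodMk measurable_const)).aestronglyMeasurable c
      (.of_forall fun _ => abs_indicator_one_mul_le _ _ (hc _))

theorem measurable_smoothedProj [IsFiniteMeasure μ] (hf : Measurable f) (hH : MeasurableSet H) :
    Measurable (smoothedProj f μ H) :=
  (StronglyMeasurable.integral_prod_right' (ν := μ) ((measurable_indicator_mul_sub_skewProj
    hf hH).comp measurable_swap).stronglyMeasurable).measurable

theorem abs_smoothedProj_le [IsProbabilityMeasure μ] (hc : ∀ q, |f q| ≤ c)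
    (p : (Fin m → ℝ) × (Fin m → ℝ)) : |smoothedProj f μ H p| ≤ c := by
  simpa [smoothedProj] using norm_integral_le_of_norm_le_const (μ := μ) (C := c)
    (f := fun x => H.indicator 1 (x, p.1) * f (p.2 - skewProj p.1 x))
    (.of_forall fun x => abs_indicator_one_mul_le _ _ (hc _))

theorem smoothedProj_sub [IsFiniteMeasure μ] (hf : Measurable f) (hg : Measurable g)
    (hc : ∀ q, |f q| ≤ c) (hd : ∀ q, |g q| ≤ d) (hH : MeasurableSet H)
    (p : (Fin m → ℝ) × (Fin m → ℝ)) :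
    smoothedProj (fun q => f q - g q) μ H p = smoothedProj f μ H p - smoothedProj g μ H p := by
  simp only [smoothedProj, mul_sub]
  exact integral_sub (integrable_indicator_mul_sub_skewProj hf hc hH p)
    (integrable_indicator_mul_sub_skewProj hg hd hH p)

theorem setIntegral_mul_eq_correlation (hf₀ : ∀ q, 1 < ‖q‖ → f q = 0) {v : Fin m → ℝ}
    (hv : ‖v‖ ≤ R) {x y : Fin (m + 1) → ℝ} (hx : ‖x‖ ≤ S) (hD : (1 + R) * S + 1 ≤ D) :
    ∫ u in closedBall 0 D, f (u - skewProj v x) * g (u - skewProj v y) =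
      correlation f g (skewProj v (x - y)) := by
  rw [setIntegral_eq_integral_of_forall_compl_eq_zero, correlation,
    ← integral_add_right_eq_self _ (skewProj v x)]
  · congr with q
    rw [skewProj_sub]
    congr 2 <;> abel
  · intro u hu
    have hproj : ‖skewProj v x‖ ≤ (1 + R) * S := by
      refine (norm_skewProj_le v x).trans ?_
      have : 0 ≤ 1 + R := by linarith [norm_nonneg v]
      gcongr
    have hDu : D < ‖u‖ := by simpa using hu
    rw [hf₀ _ (by linarith [norm_sub_norm_le u (skewProj v x)]), zero_mul]

theorem integrable_tent_mul_indicator_mul (hR : 0 ≤ R) (hf : Measurable f) (hg : Measurable g)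
    (hc : ∀ q, |f q| ≤ c) (hd : ∀ q, |g q| ≤ d) (hH : MeasurableSet H) (hH' : MeasurableSet H')
    (x y : Fin (m + 1) → ℝ) :
    Integrable (fun p => tent R p.1 * (H.indicator 1 (x, p.1) * f (p.2 - skewProj p.1 x)) *
      (H'.indicator 1 (y, p.1) * g (p.2 - skewProj p.1 y))) (cubeMeasure m R D) :=
  integrable_mul_mul_of_abs_le (measurable_tent_fst R)
    ((measurable_indicator_mul_sub_skewProj hf hH).comp
      (measurable_const.prodMk measurable_id : Measurable fun p => (x, p)))
    ((measurable_indicator_mul_sub_skewProj hg hH').comp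
      (measurable_const.prodMk measurable_id : Measurable fun p => (y, p)))
    (fun _ => abs_tent_le hR _) (fun _ => abs_indicator_one_mul_le _ _ (hc _))
    (fun _ => abs_indicator_one_mul_le _ _ (hd _))

theorem pairing_eq [IsFiniteMeasure μ] [IsFiniteMeasure ν] (hR : 0 ≤ R) (hf : Measurable f)
    (hg : Measurable g) (hc : ∀ q, |f q| ≤ c) (hd : ∀ q, |g q| ≤ d)
    (hf₀ : ∀ q, 1 < ‖q‖ → f q = 0) (hH : MeasurableSet H) (hH' : MeasurableSet H')
    (hμ : μ (closedBall 0 S)ᶜ = 0) (hD : (1 + R) * S + 1 ≤ D) :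
    pairing R D f g μ ν H H' = ∫ z : (Fin (m + 1) → ℝ) × (Fin (m + 1) → ℝ),
      (∫ v in closedBall 0 R, tent R v * (H.indicator 1 (z.1, v) * H'.indicator 1 (z.2, v)) *
        correlation f g (skewProj v (z.1 - z.2))) ∂(μ.prod ν) := by
  unfold pairing smoothedProj
  rw [integral_mul_integral_mul_integral μ ν _ (measurable_tent_fst R)
    (measurable_indicator_mul_sub_skewProj hf hH) (measurable_indicator_mul_sub_skewProj hg hH')
    (fun p => abs_tent_le hR _) (fun x p => abs_indicator_one_mul_le _ _ (hc _))
    (fun x p => abs_indicator_one_mul_le _ _ (hd _))]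
  have hball : ∀ᵐ z ∂(μ.prod ν), z.1 ∈ closedBall (0 : Fin (m + 1) → ℝ) S :=
    Measure.quasiMeasurePreserving_fst.ae (mem_ae_iff.2 hμ)
  refine integral_congr_ae ?_
  filter_upwards [hball] with z hz
  rw [cubeMeasure, integral_prod _
    (integrable_tent_mul_indicator_mul hR hf hg hc hd hH hH' z.1 z.2)]
  refine setIntegral_congr_fun isClosed_closedBall.measurableSet fun v hv => ?_
  rw [← setIntegral_mul_eq_correlation hf₀ (by simpa using hv) (by simpa using hz) hD,
    ← integral_const_mul]
  congr with u
  ring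

theorem pairing_univ_eq [IsFiniteMeasure μ] [IsFiniteMeasure ν] (hR : 0 ≤ R) (hf : Measurable f)
    (hg : Measurable g) (hc : ∀ q, |f q| ≤ c) (hd : ∀ q, |g q| ≤ d)
    (hf₀ : ∀ q, 1 < ‖q‖ → f q = 0) (hμ : μ (closedBall 0 S)ᶜ = 0) (hD : (1 + R) * S + 1 ≤ D) :
    pairing R D f g μ ν univ univ = ∫ z : (Fin (m + 1) → ℝ) × (Fin (m + 1) → ℝ),
      avgCorrelation R f g (z.1 - z.2) ∂(μ.prod ν) := by
  rw [pairing_eq hR hf hg hc hd hf₀ .univ .univ hμ hD]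
  congr with z
  simp only [indicator_univ, Pi.one_apply, mul_one, avgCorrelation]
  exact setIntegral_eq_integral_of_forall_compl_eq_zero fun v hv => by
    rw [tent_eq_zero hv, zero_mul]

theorem pairing_cubeKernel_comm [IsFiniteMeasure μ] [IsFiniteMeasure ν] (hR : 0 ≤ R) {r ρ : ℝ}
    (hr : 0 < r) (hr₁ : r ≤ 1) (hρ : 0 < ρ) (hρ₁ : ρ ≤ 1) (hH : MeasurableSet H)
    (hH' : MeasurableSet H') (hμ : μ (closedBall 0 S)ᶜ = 0) (hD : (1 + R) * S + 1 ≤ D) :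
    pairing R D (cubeKernel r) (cubeKernel ρ) μ ν H H' =
      pairing R D (cubeKernel ρ) (cubeKernel r) μ ν H H' := by
  rw [pairing_eq hR (measurable_cubeKernel r) (measurable_cubeKernel ρ) (abs_cubeKernel_le hr)
      (abs_cubeKernel_le hρ) (fun q hq => cubeKernel_eq_zero (by linarith)) hH hH' hμ hD,
    pairing_eq hR (measurable_cubeKernel ρ) (measurable_cubeKernel r) (abs_cubeKernel_le hρ)
      (abs_cubeKernel_le hr) (fun q hq => cubeKernel_eq_zero (by linarith)) hH hH' hμ hD]
  simp only [correlation_cubeKernel_comm r ρ]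

end Smoothing

/-! ### Comparison of the scales -/

theorem integral_le_mul_toReal {Ω : Type*} [MeasurableSpace Ω] {κ : Measure Ω} {F : Ω → ℝ}
    {K : ℝ} (hK : 0 ≤ K) {I : ℝ≥0∞} (hI : I ≠ ∞) (h : ∫⁻ ω, ‖F ω‖ₑ ∂κ ≤ ENNReal.ofReal K * I) :
    ∫ ω, F ω ∂κ ≤ K * I.toReal := by
  have hnorm := ENNReal.toReal_mono (by finiteness)
    ((enorm_integral_le_lintegral_enorm F).trans h)
  rw [toReal_enorm, ENNReal.toReal_mul, ENNReal.toReal_ofReal hK] at hnorm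
  exact (Real.le_norm_self _).trans hnorm

theorem enorm_le_ofReal_mul_edist_rpow_neg {E : Type*} [NormedAddCommGroup E] {a b : E}
    {K s t : ℝ} (hK : 0 < K) (hs : 0 < s) (h : a ≠ b → |t| ≤ K * ‖a - b‖ ^ (-s)) :
    ‖t‖ₑ ≤ ENNReal.ofReal K * edist a b ^ (-s) := by
  rcases eq_or_ne a b with rfl | hab
  · rw [edist_self, ENNReal.zero_rpow_of_neg (by linarith), ENNReal.mul_top (by simpa using hK)]
    exact le_top
  · rw [edist_dist, dist_eq_norm, ENNReal.ofReal_rpow_of_pos (norm_sub_pos_iff.2 hab),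
      ← ENNReal.ofReal_mul hK.le, Real.enorm_eq_ofReal_abs]
    exact ENNReal.ofReal_le_ofReal (h hab)

theorem mul_mul_add_mul_mul_le {c t : ℝ} (hc : 0 < c) (ht : 0 ≤ t) (x x' y y' : ℝ) :
    t * x' * y' + t * x' * y ≤ t * x * y + t * x * y' +
      (c / 2 * (t * (x' - x) * (x' - x)) + c⁻¹ * (t * y' * y' + t * y * y)) := by
  have hyoung : (x' - x) * (y' + y) ≤ c / 2 * (x' - x) ^ 2 + c⁻¹ * (y' ^ 2 + y ^ 2) := by
    have hsq : c⁻¹ * (y' + y) ^ 2 ≤ c⁻¹ * (2 * (y' ^ 2 + y ^ 2)) := by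
      gcongr
      exact add_sq_le
    linarith [two_mul_le_add_mul_sq (a := x' - x) (b := y' + y) hc]
  linear_combination t * hyoung

theorem le_add_mul_of_forall_half_le {Q : ℝ → ℝ} {a b κ : ℝ} (hκ : 0 < κ) (hb : 0 ≤ b)
    (h₁ : Q 1 ≤ a) (hstep : ∀ r, 0 < r → r ≤ 1 → Q (r / 2) ≤ Q r + b * r ^ κ) (J : ℕ) :
    Q ((2⁻¹ : ℝ) ^ J) ≤ a + b * (1 - 2⁻¹ ^ κ)⁻¹ := by
  set q : ℝ := 2⁻¹ ^ κ
  have hq : 0 < q := by positivity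
  have hq₁ : q < 1 := Real.rpow_lt_one (by norm_num) (by norm_num) hκ
  have hsum : Q ((2⁻¹ : ℝ) ^ J) ≤ a + b * ∑ j ∈ Finset.range J, q ^ j := by
    induction J with
    | zero => simpa using h₁
    | succ J ih =>
      have hJ := hstep (2⁻¹ ^ J) (by positivity) (pow_le_one₀ (by norm_num) (by norm_num))
      rw [← Real.rpow_pow_comm (by norm_num), div_eq_mul_inv, ← pow_succ] at hJ
      change _ ≤ _ + b * q ^ J at hJ
      rw [Finset.sum_range_succ]
      linarith
  have hgeom : ∑ j ∈ Finset.range J, q ^ j ≤ (1 - q)⁻¹ := by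
    rw [← tsum_geometric_of_lt_one hq.le hq₁]
    exact (summable_geometric_of_lt_one hq.le hq₁).sum_le_tsum _ fun _ _ => by positivity
  exact hsum.trans (by gcongr)

section MultiScale

variable {m : ℕ} {μ ν : Measure (Fin (m + 1) → ℝ)} {R S D : ℝ}
  {H : Set ((Fin (m + 1) → ℝ) × (Fin m → ℝ))}

theorem exists_pairing_diffKernel_le [IsFiniteMeasure μ] (hR : 1 ≤ R) {s : ℝ} (hs₀ : 0 < s)
    (hs₁ : s ≤ m + 1) (hE : ∫⁻ z, edist z.1 z.2 ^ (-s) ∂(μ.prod μ) ≠ ∞)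
    (hμ : μ (closedBall 0 S)ᶜ = 0) (hD : (1 + R) * S + 1 ≤ D) :
    ∃ C : ℝ, 0 ≤ C ∧ ∀ r : ℝ, 0 < r → r ≤ 1 →
      pairing R D (diffKernel r) (diffKernel r) μ μ univ univ ≤ C * r ^ (s - m) := by
  obtain ⟨C, hC₀, hC⟩ := exists_abs_avgCorrelation_le hR hs₀.le hs₁
  refine ⟨(C + 1) * (∫⁻ z, edist z.1 z.2 ^ (-s) ∂(μ.prod μ)).toReal, by positivity,
    fun r hr hr₁ => ?_⟩
  rw [pairing_univ_eq (by linarith) (measurable_diffKernel r) (measurable_diffKernel r)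
    (abs_diffKernel_le hr) (abs_diffKernel_le hr)
    (fun q hq => diffKernel_eq_zero hr (by linarith)) hμ hD, mul_right_comm]
  refine integral_le_mul_toReal (by positivity) hE ?_
  rw [← lintegral_const_mul' _ _ ENNReal.ofReal_ne_top]
  refine lintegral_mono fun z => enorm_le_ofReal_mul_edist_rpow_neg (by positivity) hs₀ fun hz => ?_
  refine (hC r hr _ (sub_ne_zero.2 hz)).trans ?_
  rw [mul_assoc]
  gcongr
  linarith

/-- The pairs of points which both belong to the section of `H` in a common direction. -/
def sectionPairs (H : Set ((Fin (m + 1) → ℝ) × (Fin m → ℝ))) :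
    Set (((Fin (m + 1) → ℝ) × (Fin (m + 1) → ℝ)) × (Fin m → ℝ)) :=
  {p | (p.1.1, p.2) ∈ H ∧ (p.1.2, p.2) ∈ H}

/-- The integral over the directions `v` in a ball of the `β`-energy of the image, under the skew
projection in the direction `v`, of the restriction of `ν` to the section of `H` at `v`. -/
noncomputable def sectionEnergy (β R : ℝ) (ν : Measure (Fin (m + 1) → ℝ))
    (H : Set ((Fin (m + 1) → ℝ) × (Fin m → ℝ))) : ℝ≥0∞ :=
  ∫⁻ p in sectionPairs H, edist (skewProj p.2 p.1.1) (skewProj p.2 p.1.2) ^ (-β)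
    ∂((ν.prod ν).prod (volume.restrict (closedBall 0 R)))

theorem measurable_edist_skewProj (β : ℝ) :
    Measurable fun p : ((Fin (m + 1) → ℝ) × (Fin (m + 1) → ℝ)) × (Fin m → ℝ) =>
      edist (skewProj p.2 p.1.1) (skewProj p.2 p.1.2) ^ (-β) :=
  ((continuous_skewProj.measurable.comp
    (measurable_snd.prodMk (measurable_fst.comp measurable_fst))).edist
      (continuous_skewProj.measurable.comp
        (measurable_snd.prodMk (measurable_snd.comp measurable_fst)))).pow_const _

theorem measurableSet_sectionPairs (hH : MeasurableSet H) : MeasurableSet (sectionPairs H) :=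
  (((measurable_fst.comp measurable_fst).prodMk measurable_snd) hH).inter
    (((measurable_snd.comp measurable_fst).prodMk measurable_snd) hH)

theorem correlation_cubeKernel_eq_zero {r : ℝ} {a : Fin m → ℝ} (h : 2 * r < ‖a‖) :
    correlation (cubeKernel r) (cubeKernel r) a = 0 := by
  refine integral_eq_zero_of_ae (.of_forall fun q => mul_eq_zero.2 ?_)
  rcases lt_or_ge r ‖q‖ with hq | hq
  · exact Or.inl (cubeKernel_eq_zero hq)
  · refine Or.inr (cubeKernel_eq_zero ?_)
    have := norm_sub_norm_le a (-q)
    rw [norm_neg, sub_neg_eq_add, add_comm] at this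
    linarith

theorem abs_correlation_cubeKernel_le {r : ℝ} (hr : 0 < r) (a : Fin m → ℝ) :
    |correlation (cubeKernel r) (cubeKernel r) a| ≤ ((2 * r) ^ m)⁻¹ := by
  have h := abs_integral_mul_le (integrable_cubeKernel r) (g := fun q => cubeKernel r (q + a))
    (m := m) fun q => abs_cubeKernel_le hr _
  simpa only [abs_of_nonneg (cubeKernel_nonneg hr _), integral_cubeKernel hr, one_mul] using! h

theorem enorm_correlation_cubeKernel_le {r β : ℝ} (hr : 0 < r) (hβ : 0 < β) (a b : Fin m → ℝ) :
    ‖correlation (cubeKernel r) (cubeKernel r) (a - b)‖ₑ ≤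
      ENNReal.ofReal ((2 * r) ^ (β - m)) * edist a b ^ (-β) := by
  refine enorm_le_ofReal_mul_edist_rpow_neg (by positivity) hβ fun hab => ?_
  have hpos : 0 < ‖a - b‖ := norm_sub_pos_iff.2 hab
  rcases le_or_gt ‖a - b‖ (2 * r) with hle | hgt
  · calc _ ≤ ((2 * r) ^ m)⁻¹ := abs_correlation_cubeKernel_le hr _
      _ = (2 * r) ^ (β - m) * (2 * r) ^ (-β) := by
        rw [← Real.rpow_add (by positivity), ← Real.rpow_natCast, ← Real.rpow_neg (by positivity)]
        ring_nf
      _ ≤ _ := by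
        gcongr ?_ * ?_
        exact Real.rpow_le_rpow_of_nonpos hpos hle (by linarith)
  · rw [correlation_cubeKernel_eq_zero hgt, abs_zero]
    positivity

theorem lintegral_enorm_sectionPairs_le (hR : 0 ≤ R) [SFinite ν] {r β : ℝ} (hr : 0 < r)
    (hβ : 0 < β) (hH : MeasurableSet H) :
    ∫⁻ z : (Fin (m + 1) → ℝ) × (Fin (m + 1) → ℝ), (∫⁻ v in closedBall 0 R,
        ‖tent R v * (H.indicator 1 (z.1, v) * H.indicator 1 (z.2, v)) *
          correlation (cubeKernel r) (cubeKernel r) (skewProj v (z.1 - z.2))‖ₑ) ∂(ν.prod ν) ≤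
      ENNReal.ofReal (R * (2 * r) ^ (β - m)) * sectionEnergy β R ν H := by
  rw [sectionEnergy, ← lintegral_indicator (measurableSet_sectionPairs hH),
    lintegral_prod _ (((measurable_edist_skewProj β).indicator
      (measurableSet_sectionPairs hH)).aemeasurable),
    ← lintegral_const_mul' _ _ ENNReal.ofReal_ne_top]
  refine lintegral_mono fun z => ?_
  rw [← lintegral_const_mul' _ _ ENNReal.ofReal_ne_top]
  refine lintegral_mono fun v => ?_
  by_cases hz : (z.1, v) ∈ H ∧ (z.2, v) ∈ H
  · rw [indicator_of_mem (show (z, v) ∈ sectionPairs H from hz)]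
    simp only [hz, indicator_of_mem, Pi.one_apply, mul_one, enorm_mul]
    rw [skewProj_sub, ENNReal.ofReal_mul hR, mul_assoc]
    gcongr
    · rw [Real.enorm_of_nonneg (tent_nonneg R v)]
      exact ENNReal.ofReal_le_ofReal (tent_le hR v)
    · exact enorm_correlation_cubeKernel_le hr hβ _ _
  · rcases not_and_or.1 hz with hz | hz <;> simp [hz]

theorem pairing_cubeKernel_self_le [IsFiniteMeasure ν] (hR : 0 ≤ R) {r β : ℝ} (hr : 0 < r)
    (hr₁ : r ≤ 1) (hβ : 0 < β) (hH : MeasurableSet H) (hE : sectionEnergy β R ν H ≠ ∞)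
    (hν : ν (closedBall 0 S)ᶜ = 0) (hD : (1 + R) * S + 1 ≤ D) :
    pairing R D (cubeKernel r) (cubeKernel r) ν ν H H ≤
      R * (2 * r) ^ (β - m) * (sectionEnergy β R ν H).toReal := by
  rw [pairing_eq hR (measurable_cubeKernel r) (measurable_cubeKernel r) (abs_cubeKernel_le hr)
      (abs_cubeKernel_le hr) (fun q hq => cubeKernel_eq_zero (by linarith)) hH hH hν hD]
  exact integral_le_mul_toReal (by positivity) hE ((lintegral_mono fun z =>
    enorm_integral_le_lintegral_enorm _).trans (lintegral_enorm_sectionPairs_le hR hr hβ hH))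

theorem integrable_tent_mul_mul {F G : (Fin m → ℝ) × (Fin m → ℝ) → ℝ} (hR : 0 ≤ R)
    (hF : Measurable F) (hG : Measurable G) {c d : ℝ} (hc : ∀ p, |F p| ≤ c) (hd : ∀ p, |G p| ≤ d) :
    Integrable (fun p => tent R p.1 * F p * G p) (cubeMeasure m R D) :=
  integrable_mul_mul_of_abs_le (measurable_tent_fst R) hF hG (fun _ => abs_tent_le hR _) hc hd

theorem pairing_half_sub_le [IsProbabilityMeasure μ] [IsProbabilityMeasure ν] (hR : 0 ≤ R) {r : ℝ}
    (hr : 0 < r) (hr₁ : r ≤ 1) (hH : MeasurableSet H)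
    (hμ : μ (closedBall 0 S)ᶜ = 0) (hD : (1 + R) * S + 1 ≤ D) {c : ℝ} (hc : 0 < c) :
    pairing R D (cubeKernel (r / 2)) (cubeKernel (r / 2)) μ ν univ H ≤
      pairing R D (cubeKernel r) (cubeKernel r) μ ν univ H +
      (c / 2 * pairing R D (diffKernel r) (diffKernel r) μ μ univ univ +
      c⁻¹ * (pairing R D (cubeKernel (r / 2)) (cubeKernel (r / 2)) ν ν H H +
        pairing R D (cubeKernel r) (cubeKernel r) ν ν H H)) := by
  have hr₂ : 0 < r / 2 := half_pos hr
  have hcomm := pairing_cubeKernel_comm (μ := μ) (ν := ν) hR hr hr₁ hr₂ (by linarith)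
    .univ hH hμ hD
  have hsub (p) : smoothedProj (diffKernel r) μ univ p =
      smoothedProj (cubeKernel (r / 2)) μ univ p - smoothedProj (cubeKernel r) μ univ p :=
    smoothedProj_sub (measurable_cubeKernel _) (measurable_cubeKernel _) (abs_cubeKernel_le hr₂)
      (abs_cubeKernel_le hr) .univ p
  have hμm (ρ : ℝ) := measurable_smoothedProj (μ := μ) (measurable_cubeKernel (m := m) ρ) .univ
  have hνm (ρ : ℝ) := measurable_smoothedProj (μ := ν) (measurable_cubeKernel ρ) hH
  have hdm := measurable_smoothedProj (μ := μ) (measurable_diffKernel (m := m) r) .univ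
  have hμb {ρ : ℝ} (hρ : 0 < ρ) :=
    abs_smoothedProj_le (μ := μ) (H := univ) (abs_cubeKernel_le (m := m) hρ)
  have hνb {ρ : ℝ} (hρ : 0 < ρ) :=
    abs_smoothedProj_le (μ := ν) (H := H) (abs_cubeKernel_le (m := m) hρ)
  have hdb := abs_smoothedProj_le (μ := μ) (H := univ) (abs_diffKernel_le (m := m) hr)
  have hμν {ρ σ : ℝ} (hρ : 0 < ρ) (hσ : 0 < σ) :=
    integrable_tent_mul_mul (D := D) hR (hμm ρ) (hνm σ) (hμb hρ) (hνb hσ)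
  have hνν {ρ : ℝ} (hρ : 0 < ρ) :=
    integrable_tent_mul_mul (D := D) hR (hνm ρ) (hνm ρ) (hνb hρ) (hνb hρ)
  have hdd := (integrable_tent_mul_mul (D := D) hR hdm hdm hdb hdb).const_mul (c / 2)
  have hsum := ((hνν hr₂).add (hνν hr)).const_mul c⁻¹
  unfold pairing at hcomm ⊢
  have hmono := integral_mono ((hμν hr₂ hr₂).add (hμν hr₂ hr))
    (((hμν hr hr).add (hμν hr hr₂)).add (hdd.add hsum)) fun p => by
      simp only [Pi.add_apply, hsub]
      exact mul_mul_add_mul_mul_le hc (tent_nonneg R p.1) _ _ _ _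
  rw [integral_add' (hμν hr₂ hr₂) (hμν hr₂ hr),
    integral_add' ((hμν hr hr).add (hμν hr hr₂)) (hdd.add hsum), integral_add' hdd hsum,
    integral_const_mul, integral_const_mul, integral_add' (hμν hr hr) (hμν hr hr₂),
    integral_add' (hνν hr₂) (hνν hr)] at hmono
  linarith

theorem exists_pairing_one_le [IsProbabilityMeasure μ] [IsProbabilityMeasure ν] (hR : 0 ≤ R) :
    ∃ C : ℝ, 0 ≤ C ∧ ∀ H : Set ((Fin (m + 1) → ℝ) × (Fin m → ℝ)), MeasurableSet H → ∀ η : ℝ, 0 < η →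
      pairing R D (cubeKernel 1) (cubeKernel 1) μ ν univ H ≤
      C * η + η⁻¹ * pairing R D (cubeKernel 1) (cubeKernel 1) ν ν H H := by
  refine ⟨R * (cubeMeasure m R D).real univ, by positivity, fun H hH η hη => ?_⟩
  have hμm := measurable_smoothedProj (μ := μ) (measurable_cubeKernel (m := m) 1) .univ
  have hνm := measurable_smoothedProj (μ := ν) (measurable_cubeKernel 1) hH
  have hμb := abs_smoothedProj_le (μ := μ) (H := univ) (abs_cubeKernel_le (m := m) one_pos)
  have hνb := abs_smoothedProj_le (μ := ν) (H := H) (abs_cubeKernel_le (m := m) one_pos)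
  have hνν := (integrable_tent_mul_mul (D := D) hR hνm hνm hνb hνb).const_mul η⁻¹
  unfold pairing
  have hmono := integral_mono (integrable_tent_mul_mul (D := D) hR hμm hνm hμb hνb)
    ((integrable_const (R * η)).add hνν) fun p => ?_
  · rw [integral_add' (integrable_const _) hνν, integral_const, integral_const_mul,
      smul_eq_mul] at hmono
    linarith
  · have hsq : smoothedProj (cubeKernel 1) μ univ p ^ 2 ≤ 1 := (sq_le_one_iff_abs_le_one _).2
      ((hμb p).trans (inv_le_one_of_one_le₀ (one_le_pow₀ (by norm_num))))
    simp only [Pi.add_apply]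
    have ht := tent_nonneg R p.1
    have htR := tent_le hR p.1
    generalize tent R p.1 = t at *
    generalize smoothedProj (cubeKernel 1) μ univ p = x at *
    generalize smoothedProj (cubeKernel 1) ν H p = y
    have hyoung : x * y ≤ η * x ^ 2 + η⁻¹ * y ^ 2 := by
      have : 0 ≤ η * x ^ 2 + η⁻¹ * y ^ 2 := by positivity
      linarith [two_mul_le_add_mul_sq (a := x) (b := y) hη]
    calc t * x * y = t * (x * y) := mul_assoc _ _ _
      _ ≤ t * (η * x ^ 2 + η⁻¹ * y ^ 2) := by gcongr
      _ = t * (η * x ^ 2) + η⁻¹ * (t * y * y) := by ring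
      _ ≤ R * (η * 1) + η⁻¹ * (t * y * y) := by gcongr
      _ = _ := by rw [mul_one]

theorem pairing_half_le [IsProbabilityMeasure μ] [IsProbabilityMeasure ν] (hR : 0 ≤ R)
    {r s β C η : ℝ} (hr : 0 < r) (hr₁ : r ≤ 1) (hβ : 0 < β) (hβm : β ≤ m) (hC : 0 ≤ C)
    (hdiff : pairing R D (diffKernel r) (diffKernel r) μ μ univ univ ≤ C * r ^ (s - m))
    (hH : MeasurableSet H) (hE : sectionEnergy β R ν H ≠ ∞) (hμ : μ (closedBall 0 S)ᶜ = 0)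
    (hν : ν (closedBall 0 S)ᶜ = 0) (hD : (1 + R) * S + 1 ≤ D) (hη : 0 < η) :
    pairing R D (cubeKernel (r / 2)) (cubeKernel (r / 2)) μ ν univ H ≤
      pairing R D (cubeKernel r) (cubeKernel r) μ ν univ H +
      (C * η + 2 * R * (η⁻¹ * (sectionEnergy β R ν H).toReal)) * r ^ ((s + β) / 2 - m) := by
  set E := (sectionEnergy β R ν H).toReal
  have : 0 ≤ E := ENNReal.toReal_nonneg
  -- This choice of `c` balances the bounds for the two pairings of `diffKernel` and `cubeKernel`.
  have hc : 0 < η * r ^ ((β - s) / 2) := by positivity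
  have hself : pairing R D (cubeKernel r) (cubeKernel r) ν ν H H ≤ R * r ^ (β - m) * E := by
    refine (pairing_cubeKernel_self_le hR hr hr₁ hβ hH hE hν hD).trans ?_
    gcongr ?_ * ?_ * ?_
    exact Real.rpow_le_rpow_of_nonpos hr (by linarith) (by linarith)
  have hself_half := pairing_cubeKernel_self_le hR (half_pos hr) (by linarith) hβ hH hE hν hD
  rw [mul_div_cancel₀ r (two_ne_zero' ℝ)] at hself_half
  calc _ ≤ _ := pairing_half_sub_le (ν := ν) hR hr hr₁ hH hμ hD hc
    _ ≤ pairing R D (cubeKernel r) (cubeKernel r) μ ν univ H +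
        (η * r ^ ((β - s) / 2) / 2 * (C * r ^ (s - m)) +
          (η * r ^ ((β - s) / 2))⁻¹ * (R * r ^ (β - m) * E + R * r ^ (β - m) * E)) := by gcongr
    _ ≤ pairing R D (cubeKernel r) (cubeKernel r) μ ν univ H +
        (η * r ^ ((β - s) / 2) * (C * r ^ (s - m)) +
          (η * r ^ ((β - s) / 2))⁻¹ * (R * r ^ (β - m) * E + R * r ^ (β - m) * E)) := by
      gcongr
      exact half_le_self hc.le
    _ = pairing R D (cubeKernel r) (cubeKernel r) μ ν univ H +
        (C * η * (r ^ ((β - s) / 2) * r ^ (s - m)) +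
          2 * R * (η⁻¹ * E) * (r ^ (-((β - s) / 2)) * r ^ (β - m))) := by
      rw [mul_inv, Real.rpow_neg hr.le]
      ring
    _ = _ := by
      rw [← Real.rpow_add hr, ← Real.rpow_add hr]
      ring_nf

theorem exists_pairing_cubeKernel_le [IsProbabilityMeasure μ] [IsProbabilityMeasure ν] (hR : 1 ≤ R)
    {s β : ℝ} (hs : s ≤ m + 1) (hβ : 0 < β) (hβm : β ≤ m) (hsβ : 2 * m < s + β)
    (hE : ∫⁻ z, edist z.1 z.2 ^ (-s) ∂(μ.prod μ) ≠ ∞) (hμ : μ (closedBall 0 S)ᶜ = 0)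
    (hν : ν (closedBall 0 S)ᶜ = 0) (hD : (1 + R) * S + 1 ≤ D) :
    ∃ C : ℝ, 0 ≤ C ∧ ∀ H : Set ((Fin (m + 1) → ℝ) × (Fin m → ℝ)), MeasurableSet H →
      sectionEnergy β R ν H ≠ ∞ → ∀ η : ℝ, 0 < η → ∀ J : ℕ,
      pairing R D (cubeKernel ((2⁻¹ : ℝ) ^ J)) (cubeKernel ((2⁻¹ : ℝ) ^ J)) μ ν univ H ≤
      C * (η + η⁻¹ * (sectionEnergy β R ν H).toReal) := by
  have hR₀ : 0 ≤ R := by linarith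
  obtain ⟨C₁, hC₁, hdiff⟩ := exists_pairing_diffKernel_le hR (by linarith) hs hE hμ hD
  obtain ⟨C₀, hC₀, hone⟩ := exists_pairing_one_le (μ := μ) (ν := ν) (D := D) hR₀
  set g : ℝ := (1 - 2⁻¹ ^ ((s + β) / 2 - m))⁻¹
  have : 0 ≤ g := inv_nonneg.2 (sub_nonneg.2
    (Real.rpow_le_one (by norm_num) (by norm_num) (by linarith)))
  refine ⟨C₀ + R + (C₁ + 2 * R) * g, by positivity, fun H hH hHE η hη J => ?_⟩
  set E := (sectionEnergy β R ν H).toReal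
  have : 0 ≤ E := ENNReal.toReal_nonneg
  have hmix (u v : ℝ) (hu : 0 ≤ u) (hv : 0 ≤ v) :
      u * η + v * (η⁻¹ * E) ≤ (u + v) * (η + η⁻¹ * E) := by
    have : 0 ≤ u * (η⁻¹ * E) + v * η := by positivity
    linarith
  have hstart : pairing R D (cubeKernel 1) (cubeKernel 1) μ ν univ H ≤
      C₀ * η + R * (η⁻¹ * E) := by
    have hself := pairing_cubeKernel_self_le hR₀ one_pos le_rfl hβ hH hHE hν hD
    have hself' : pairing R D (cubeKernel 1) (cubeKernel 1) ν ν H H ≤ R * 1 * E := by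
      refine hself.trans ?_
      gcongr
      exact Real.rpow_le_one_of_one_le_of_nonpos (by norm_num) (by linarith)
    calc _ ≤ _ := hone H hH η hη
      _ ≤ C₀ * η + η⁻¹ * (R * 1 * E) := by gcongr
      _ = _ := by ring
  have htel := le_add_mul_of_forall_half_le
    (Q := fun r => pairing R D (cubeKernel r) (cubeKernel r) μ ν univ H)
    (by linarith) (by positivity) hstart
    (fun r hr hr₁ => pairing_half_le hR₀ hr hr₁ hβ hβm hC₁ (hdiff r hr hr₁) hH hHE hμ hν hD hη) J
  calc _ ≤ _ := htel
    _ ≤ (C₀ + R) * (η + η⁻¹ * E) + (C₁ + 2 * R) * (η + η⁻¹ * E) * g :=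
      add_le_add (hmix _ _ hC₀ hR₀)
        (mul_le_mul_of_nonneg_right (hmix _ _ hC₁ (by positivity)) (by assumption))
    _ = _ := by ring

end MultiScale

/-! ### Intersections of projections in positively many directions -/

section Intersection

open Filter Topology

theorem exists_pos_measure_le_ne_zero {Ω : Type*} [MeasurableSpace Ω] {κ : Measure Ω} [NeZero κ]
    {f : Ω → ℝ} (hf : ∀ᵐ ω ∂κ, 0 < f ω) : ∃ a : ℝ, 0 < a ∧ κ {ω | a ≤ f ω} ≠ 0 := by
  by_contra! hnull
  have hiUnion : κ (⋃ k : ℕ, {ω | 1 / ((k : ℝ) + 1) ≤ f ω}) = 0 :=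
    measure_iUnion_null fun k => hnull _ (by positivity)
  have hfalse : ∀ᵐ _ ∂κ, False := by
    filter_upwards [hf, measure_eq_zero_iff_ae_notMem.1 hiUnion] with ω hω hω'
    obtain ⟨k, hk⟩ := exists_nat_one_div_lt hω
    exact hω' (mem_iUnion.2 ⟨k, hk.le⟩)
  exact NeZero.ne κ (ae_eq_bot.1 (eventually_false_iff_eq_bot.1 hfalse))

theorem IsFrostman.lintegral_edist_ne_top {X : Type*} [PseudoMetricSpace X] [MeasurableSpace X]
    [BorelSpace X] [SecondCountableTopology X] {μ : Measure X} [IsFiniteMeasure μ] {s t : ℝ}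
    (hμ : IsFrostman μ t) (hs : 0 < s) (hst : s < t) :
    ∫⁻ z, edist z.1 z.2 ^ (-s) ∂(μ.prod μ) ≠ ∞ := by
  obtain ⟨C, hC, h⟩ := hμ.exists_lintegral_edist_le hs hst
  rw [lintegral_prod _ ((measurable_fst.edist measurable_snd).pow_const _).aemeasurable]
  refine ne_top_of_le_ne_top (by finiteness) ((lintegral_mono h).trans_eq (lintegral_const C))

theorem nonpos_of_forall_le_mul_add_inv_mul {c C : ℝ} {E : ℕ → ℝ} (hE : Tendsto E atTop (𝓝 0))
    (h : ∀ η, 0 < η → ∀ J, c ≤ C * (η + η⁻¹ * E J)) : c ≤ 0 := by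
  have hle (η : ℝ) (hη : 0 < η) : c ≤ C * η := by
    have hlim := ((hE.const_mul η⁻¹).const_add η).const_mul C
    rw [mul_zero, add_zero] at hlim
    exact ge_of_tendsto' hlim (h η hη)
  have hlim : Tendsto (fun η => C * η) (𝓝[>] 0) (𝓝 (C * 0)) :=
    (tendsto_nhdsWithin_of_tendsto_nhds tendsto_id).const_mul C
  rw [mul_zero] at hlim
  exact ge_of_tendsto hlim (eventually_mem_nhdsWithin.mono hle)

variable {m : ℕ} {μ ν : Measure (Fin (m + 1) → ℝ)} {R S D : ℝ}
  {H : Set ((Fin (m + 1) → ℝ) × (Fin m → ℝ))} {K : Set (Fin (m + 1) → ℝ)}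

theorem measurable_correlation {f g : (Fin m → ℝ) → ℝ} (hf : Measurable f) (hg : Measurable g) :
    Measurable (correlation f g) := by
  have hint : Measurable fun p : (Fin m → ℝ) × (Fin m → ℝ) => f p.2 * g (p.2 + p.1) :=
    (hf.comp measurable_snd).mul (hg.comp (measurable_snd.add measurable_fst))
  exact hint.stronglyMeasurable.integral_prod_right'.measurable

theorem measurable_avgCorrelation {f g : (Fin m → ℝ) → ℝ} (hf : Measurable f) (hg : Measurable g) :
    Measurable (avgCorrelation R f g) := by
  have hint : Measurable fun p : (Fin (m + 1) → ℝ) × (Fin m → ℝ) =>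
      tent R p.2 * correlation f g (skewProj p.2 p.1) :=
    ((continuous_tent R).measurable.comp measurable_snd).mul ((measurable_correlation hf hg).comp
      (continuous_skewProj.measurable.comp measurable_swap))
  exact hint.stronglyMeasurable.integral_prod_right'.measurable

theorem avgCorrelation_cubeKernel_nonneg {r : ℝ} (hr : 0 < r) (z : Fin (m + 1) → ℝ) :
    0 ≤ avgCorrelation R (cubeKernel r) (cubeKernel r) z :=
  integral_nonneg fun v => mul_nonneg (tent_nonneg R v) <| integral_nonneg fun _ =>
    mul_nonneg (cubeKernel_nonneg hr _) (cubeKernel_nonneg hr _)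

theorem inv_pow_le_avgCorrelation_cubeKernel {r a : ℝ} (hr : 0 < r) (ha : 0 < a) (hR : 1 ≤ R)
    (haR : S + 2 * r ≤ (R - 1) * a) {z : Fin (m + 1) → ℝ} (hz : ‖z‖ ≤ S) (haz : a ≤ |z 0|) :
    (S ^ m)⁻¹ ≤ avgCorrelation R (cubeKernel r) (cubeKernel r) z := by
  have hz₀ : 0 < |z 0| := ha.trans_le haz
  have htail : ‖Fin.tail z‖ ≤ ‖z‖ :=
    (pi_norm_le_iff_of_nonneg (norm_nonneg z)).2 fun i => norm_le_pi_norm z i.succ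
  calc (S ^ m)⁻¹ ≤ (|z 0| ^ m)⁻¹ := by
        gcongr
        exact (norm_le_pi_norm z 0).trans hz
    _ ≤ _ := le_avgCorrelation_cubeKernel hr (abs_pos.1 hz₀) <| calc
        ‖Fin.tail z‖ + 2 * r ≤ S + 2 * r := by linarith
        _ ≤ (R - 1) * a := haR
        _ ≤ (R - 1) * |z 0| := by gcongr

theorem le_pairing_univ [IsProbabilityMeasure μ] [IsProbabilityMeasure ν] {a : ℝ} (ha : 0 < a)
    (hR : 1 ≤ R) (haR : 2 * S + 2 ≤ (R - 1) * a) {r : ℝ} (hr : 0 < r) (hr₁ : r ≤ 1)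
    (hμ : μ (closedBall 0 S)ᶜ = 0) (hν : ν (closedBall 0 S)ᶜ = 0) (hD : (1 + R) * S + 1 ≤ D) :
    ((2 * S) ^ m)⁻¹ * (μ.prod ν).real {z | a ≤ |(z.1 - z.2) 0|} ≤
      pairing R D (cubeKernel r) (cubeKernel r) μ ν univ univ := by
  rw [pairing_univ_eq (by linarith) (measurable_cubeKernel r) (measurable_cubeKernel r)
    (abs_cubeKernel_le hr) (abs_cubeKernel_le hr) (fun q hq => cubeKernel_eq_zero (by linarith))
    hμ hD]
  have hmeas : MeasurableSet {z : (Fin (m + 1) → ℝ) × (Fin (m + 1) → ℝ) | a ≤ |(z.1 - z.2) 0|} :=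
    measurableSet_le measurable_const
      ((measurable_pi_apply 0).comp (measurable_fst.sub measurable_snd)).abs
  rw [mul_comm, ← smul_eq_mul, ← integral_indicator_const _ hmeas]
  have hint : Integrable (fun z => avgCorrelation R (cubeKernel r) (cubeKernel r) (z.1 - z.2))
      (μ.prod ν) := .of_bound ((measurable_avgCorrelation (measurable_cubeKernel r)
    (measurable_cubeKernel r)).comp (measurable_fst.sub measurable_snd)).aestronglyMeasurable _
    (.of_forall fun z => abs_integral_mul_le (integrable_tent R)
      fun v => abs_correlation_cubeKernel_le hr _)
  have hball₁ : ∀ᵐ z ∂(μ.prod ν), z.1 ∈ closedBall (0 : Fin (m + 1) → ℝ) S :=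
    Measure.quasiMeasurePreserving_fst.ae (mem_ae_iff.2 hμ)
  have hball₂ : ∀ᵐ z ∂(μ.prod ν), z.2 ∈ closedBall (0 : Fin (m + 1) → ℝ) S :=
    Measure.quasiMeasurePreserving_snd.ae (mem_ae_iff.2 hν)
  refine integral_mono_ae ((integrable_const _).indicator hmeas) hint ?_
  filter_upwards [hball₁, hball₂] with z hz₁ hz₂
  refine indicator_apply_le' (fun hz => ?_) fun _ => avgCorrelation_cubeKernel_nonneg hr _
  refine inv_pow_le_avgCorrelation_cubeKernel hr ha hR (by linarith) ?_ hz
  rw [mem_closedBall_zero_iff] at hz₁ hz₂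
  linarith [norm_sub_le z.1 z.2]

/-- The pairs of a point `y` and a direction `v` such that the skew projection of `y` in the
direction `v` is at distance at most `c` from that of some point of `K`. -/
def projNhd (K : Set (Fin (m + 1) → ℝ)) (c : ℝ) : Set ((Fin (m + 1) → ℝ) × (Fin m → ℝ)) :=
  {p | ∃ x ∈ K, ‖skewProj p.2 x - skewProj p.2 p.1‖ ≤ c}

theorem projNhd_mono (K : Set (Fin (m + 1) → ℝ)) : Monotone (projNhd K) :=
  fun _ _ hcd _ ⟨x, hx, hle⟩ => ⟨x, hx, hle.trans hcd⟩

theorem isClosed_projNhd (hK : IsCompact K) (c : ℝ) : IsClosed (projNhd K c) := by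
  have := isCompact_iff_compactSpace.1 hK
  have hclosed : IsClosed {q : K × ((Fin (m + 1) → ℝ) × (Fin m → ℝ)) |
      ‖skewProj q.2.2 q.1 - skewProj q.2.2 q.2.1‖ ≤ c} := by
    refine isClosed_le (Continuous.norm (Continuous.sub ?_ ?_)) continuous_const
    · exact continuous_skewProj.comp ((continuous_snd.comp continuous_snd).prodMk
        (continuous_subtype_val.comp continuous_fst))
    · exact continuous_skewProj.comp ((continuous_snd.comp continuous_snd).prodMk
        (continuous_fst.comp continuous_snd))
  convert isClosedMap_snd_of_compactSpace _ hclosed using 1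
  ext p
  simp [projNhd]

theorem isCompact_skewProj_image (hK : IsCompact K) (v : Fin m → ℝ) :
    IsCompact (skewProj v '' K) :=
  hK.image (continuous_skewProj.comp (Continuous.prodMk_right v))

theorem iInter_projNhd (hK : IsCompact K) {c : ℕ → ℝ} (hc₀ : ∀ J, 0 ≤ c J)
    (hc : Tendsto c atTop (𝓝 0)) :
    ⋂ J, projNhd K (c J) = {p | skewProj p.2 p.1 ∈ skewProj p.2 '' K} := by
  ext ⟨y, v⟩
  rw [mem_iInter]
  refine ⟨fun h => ?_, fun ⟨x, hx, hxy⟩ J => ⟨x, hx, ?_⟩⟩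
  · obtain ⟨x₀, hx₀, -⟩ := h 0
    change skewProj v y ∈ skewProj v '' K
    rw [(isCompact_skewProj_image hK v).isClosed.mem_iff_infDist_zero ⟨_, x₀, hx₀, rfl⟩]
    refine le_antisymm (ge_of_tendsto' hc fun J => ?_) infDist_nonneg
    obtain ⟨x, hx, hxy⟩ := h J
    refine (infDist_le_dist_of_mem (mem_image_of_mem _ hx)).trans ?_
    rwa [dist_comm, dist_eq_norm]
  · simpa [hxy] using hc₀ J

theorem pairing_univ_eq_pairing_projNhd [IsFiniteMeasure μ] [IsFiniteMeasure ν] (hR : 0 ≤ R)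
    {r : ℝ} (hr : 0 < r) (hr₁ : r ≤ 1) (hK : IsCompact K) (hμK : μ Kᶜ = 0)
    (hμ : μ (closedBall 0 S)ᶜ = 0) (hD : (1 + R) * S + 1 ≤ D) :
    pairing R D (cubeKernel r) (cubeKernel r) μ ν univ univ =
      pairing R D (cubeKernel r) (cubeKernel r) μ ν univ (projNhd K (2 * r)) := by
  have heq {H : Set ((Fin (m + 1) → ℝ) × (Fin m → ℝ))} (hH : MeasurableSet H) :=
    pairing_eq (μ := μ) (ν := ν) (H := univ) hR (measurable_cubeKernel r) (measurable_cubeKernel r)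
      (abs_cubeKernel_le hr) (abs_cubeKernel_le hr)
      (fun q hq => cubeKernel_eq_zero (by linarith)) .univ hH hμ hD
  rw [heq .univ, heq (isClosed_projNhd hK _).measurableSet]
  have hfst : ∀ᵐ z ∂(μ.prod ν), z.1 ∈ K := Measure.quasiMeasurePreserving_fst.ae (mem_ae_iff.2 hμK)
  refine integral_congr_ae ?_
  filter_upwards [hfst] with z hz
  congr with v
  by_cases hv : (z.2, v) ∈ projNhd K (2 * r)
  · simp [hv]
  · rw [correlation_cubeKernel_eq_zero, mul_zero, mul_zero]
    rw [skewProj_sub]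
    exact not_le.1 fun hle => hv ⟨z.1, hz, hle⟩

theorem sectionEnergy_univ_ne_top [IsFiniteMeasure ν] {β t : ℝ} (hβ : 0 < β) (hβm : β < m)
    (hR : 1 ≤ R) (hβt : β < t) (hν : IsFrostman ν t) : sectionEnergy β R ν univ ≠ ∞ := by
  obtain ⟨C, hC, h⟩ := exists_lintegral_edist_skewProj_le hβ hβm hR
  have hle : sectionEnergy β R ν univ ≤ C * ∫⁻ z, edist z.1 z.2 ^ (-β) ∂(ν.prod ν) := by
    simp only [sectionEnergy, sectionPairs, mem_univ, and_self, ofPred_true, Measure.restrict_univ]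
    rw [lintegral_prod _ (measurable_edist_skewProj β).aemeasurable, ← lintegral_const_mul' _ _ hC]
    exact lintegral_mono fun z => h z.1 z.2
  have hEν := hν.lintegral_edist_ne_top hβ hβt
  exact ne_top_of_le_ne_top (by finiteness) hle

theorem tendsto_sectionEnergy [SFinite ν] {β : ℝ} (hE : sectionEnergy β R ν univ ≠ ∞)
    {T : ℕ → Set ((Fin (m + 1) → ℝ) × (Fin m → ℝ))} (hT : ∀ J, MeasurableSet (T J))
    (hanti : Antitone T) :
    Tendsto (fun J => sectionEnergy β R ν (T J)) atTop (𝓝 (sectionEnergy β R ν (⋂ J, T J))) := by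
  set τ := ((ν.prod ν).prod (volume.restrict (closedBall (0 : Fin m → ℝ) R))).withDensity
    (fun p => edist (skewProj p.2 p.1.1) (skewProj p.2 p.1.2) ^ (-β))
  have hτ {H : Set ((Fin (m + 1) → ℝ) × (Fin m → ℝ))} (hH : MeasurableSet H) :
      sectionEnergy β R ν H = τ (sectionPairs H) :=
    (withDensity_apply _ (measurableSet_sectionPairs hH)).symm
  have hfin : τ (sectionPairs (T 0)) ≠ ∞ := by
    refine ne_top_of_le_ne_top (hτ .univ ▸ hE) (measure_mono fun p _ => ?_)
    exact ⟨mem_univ _, mem_univ _⟩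
  have hiInter : sectionPairs (⋂ J, T J) = ⋂ J, sectionPairs (T J) := by
    ext p
    simp only [sectionPairs, mem_iInter, mem_ofPred_eq, forall_and]
  simp only [hτ (hT _), hτ (MeasurableSet.iInter hT), hiInter]
  exact tendsto_measure_iInter_atTop
    (fun J => (measurableSet_sectionPairs (hT J)).nullMeasurableSet)
    (fun J J' h p hp => ⟨hanti h hp.1, hanti h hp.2⟩) ⟨0, hfin⟩

theorem sectionEnergy_eq_zero [SFinite ν] {β : ℝ} (hH : MeasurableSet H)
    (h : ∀ᵐ v ∂(volume.restrict (closedBall (0 : Fin m → ℝ) R)), ν {y | (y, v) ∈ H} = 0) :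
    sectionEnergy β R ν H = 0 := by
  refine setLIntegral_measure_zero _ _ (measure_mono_null (t := {p | (p.1.1, p.2) ∈ H})
    (fun p hp => hp.1) ?_)
  have hmeas : MeasurableSet {p : ((Fin (m + 1) → ℝ) × (Fin (m + 1) → ℝ)) × (Fin m → ℝ) |
      (p.1.1, p.2) ∈ H} := ((measurable_fst.comp measurable_fst).prodMk measurable_snd) hH
  rw [Measure.prod_apply_symm hmeas]
  refine (lintegral_congr_ae ?_).trans lintegral_zero
  filter_upwards [h] with v hv
  exact Measure.quasiMeasurePreserving_fst.preimage_null hv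

theorem frequently_measure_skewProj_mem_image_ne_zero [IsProbabilityMeasure μ]
    [IsProbabilityMeasure ν] (hR : 1 ≤ R) {s β c : ℝ} (hs : s ≤ m + 1) (hβ : 0 < β) (hβm : β ≤ m)
    (hsβ : 2 * m < s + β) (hEμ : ∫⁻ z, edist z.1 z.2 ^ (-s) ∂(μ.prod μ) ≠ ∞)
    (hEν : sectionEnergy β R ν univ ≠ ∞) (hK : IsCompact K) (hμK : μ Kᶜ = 0)
    (hμ : μ (closedBall 0 S)ᶜ = 0) (hν : ν (closedBall 0 S)ᶜ = 0) (hD : (1 + R) * S + 1 ≤ D)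
    (hc : 0 < c) (hpairing : ∀ r, 0 < r → r ≤ 1 →
      c ≤ pairing R D (cubeKernel r) (cubeKernel r) μ ν univ univ) :
    ∃ᶠ v in ae (volume.restrict (closedBall (0 : Fin m → ℝ) R)),
      ν {y | skewProj v y ∈ skewProj v '' K} ≠ 0 := by
  intro hnull
  simp only [not_not] at hnull
  set T : ℕ → Set ((Fin (m + 1) → ℝ) × (Fin m → ℝ)) := fun J => projNhd K (2 * 2⁻¹ ^ J)
  have hT (J) : MeasurableSet (T J) := (isClosed_projNhd hK _).measurableSet
  have hanti : Antitone T := fun i j hij => projNhd_mono K <| by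
    gcongr ?_ * ?_
    exact pow_le_pow_of_le_one (by norm_num) (by norm_num) hij
  have hscale : Tendsto (fun J : ℕ => 2 * (2⁻¹ : ℝ) ^ J) atTop (𝓝 0) := by
    simpa using (tendsto_pow_atTop_nhds_zero_of_lt_one (r := (2⁻¹ : ℝ))
      (by norm_num) (by norm_num)).const_mul 2
  have hzero : sectionEnergy β R ν (⋂ J, T J) = 0 := by
    refine sectionEnergy_eq_zero (MeasurableSet.iInter hT) ?_
    rw [iInter_projNhd hK (fun J => by positivity) hscale]
    exact hnull
  have hlim : Tendsto (fun J => (sectionEnergy β R ν (T J)).toReal) atTop (𝓝 0) :=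
    (ENNReal.tendsto_toReal ENNReal.zero_ne_top).comp (hzero ▸ tendsto_sectionEnergy hEν hT hanti)
  have hfin (J) : sectionEnergy β R ν (T J) ≠ ∞ :=
    ne_top_of_le_ne_top hEν (lintegral_mono_set fun p _ => ⟨mem_univ _, mem_univ _⟩)
  obtain ⟨C, -, hbound⟩ := exists_pairing_cubeKernel_le hR hs hβ hβm hsβ hEμ hμ hν hD
  refine hc.not_ge (nonpos_of_forall_le_mul_add_inv_mul (C := C) hlim fun η hη J => ?_)
  have hr : (0 : ℝ) < 2⁻¹ ^ J := by positivity
  have hr₁ : (2⁻¹ : ℝ) ^ J ≤ 1 := pow_le_one₀ (by norm_num) (by norm_num)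
  calc c ≤ _ := hpairing _ hr hr₁
    _ = _ := pairing_univ_eq_pairing_projNhd (by linarith) hr hr₁ hK hμK hμ hD
    _ ≤ _ := hbound (T J) (hT J) (hfin J) η hη J

theorem ae_lintegral_edist_skewProj_lt_top [SFinite ν] {β : ℝ}
    (hE : sectionEnergy β R ν univ ≠ ∞) :
    ∀ᵐ v ∂(volume.restrict (closedBall (0 : Fin m → ℝ) R)),
      ∫⁻ z, edist (skewProj v z.1) (skewProj v z.2) ^ (-β) ∂(ν.prod ν) < ∞ := by
  refine ae_lt_top (measurable_edist_skewProj β).lintegral_prod_left' ?_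
  rw [← lintegral_prod_symm _ (measurable_edist_skewProj β).aemeasurable]
  simpa [sectionEnergy, sectionPairs] using hE

theorem le_dimH_inter_of_energy_ne_top [SFinite ν] {L : Set (Fin (m + 1) → ℝ)}
    (hK : IsCompact K) (hL : IsCompact L) (hν : ν Lᶜ = 0) {β : ℝ} (hβ : 0 ≤ β) {v : Fin m → ℝ}
    (hE : ∫⁻ z, edist (skewProj v z.1) (skewProj v z.2) ^ (-β) ∂(ν.prod ν) ≠ ∞)
    (h₀ : ν {y | skewProj v y ∈ skewProj v '' K} ≠ 0) :
    ENNReal.ofReal β ≤ dimH (skewProj v '' K ∩ skewProj v '' L) := by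
  have hproj : Measurable (skewProj v) :=
    (continuous_skewProj.comp (Continuous.prodMk_right v)).measurable
  have hedist : Measurable fun z : (Fin m → ℝ) × (Fin m → ℝ) => edist z.1 z.2 ^ (-β) :=
    (measurable_fst.edist measurable_snd).pow_const _
  have hmeas : MeasurableSet (skewProj v '' K ∩ skewProj v '' L) :=
    ((isCompact_skewProj_image hK v).inter (isCompact_skewProj_image hL v)).measurableSet
  refine le_dimH_of_energy_ne_top (μ := ν.map (skewProj v)) hβ ?_ hmeas fun hz => h₀ ?_
  · rwa [← lintegral_prod (fun z => edist z.1 z.2 ^ (-β)) hedist.aemeasurable,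
      Measure.map_prod_map _ _ hproj hproj, lintegral_map hedist (hproj.prodMap hproj)]
  · rw [Measure.map_apply hproj hmeas] at hz
    refine measure_mono_null (fun y hy => ?_) (measure_union_null hz hν)
    exact (em (y ∈ L)).imp (fun hyL => ⟨hy, mem_image_of_mem _ hyL⟩) id

theorem ae_prod_abs_sub_zero_pos [SFinite μ] [SFinite ν] (hμ : ∀ c : ℝ, μ {x | x 0 = c} = 0) :
    ∀ᵐ z ∂(μ.prod ν), 0 < |(z.1 - z.2) 0| := by
  simp only [abs_pos]
  have hmeas : MeasurableSet
      {z : (Fin (m + 1) → ℝ) × (Fin (m + 1) → ℝ) | (z.1 - z.2) 0 = 0} :=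
    ((measurable_pi_apply 0).comp (measurable_fst.sub measurable_snd)) (measurableSet_singleton 0)
  refine measure_eq_zero_iff_ae_notMem.1 ((Measure.prod_apply_symm hmeas).trans ?_)
  refine (lintegral_congr fun y => ?_).trans lintegral_zero
  simpa [sub_eq_zero] using hμ (y 0)

theorem exists_frequently_le_dimH_inter [IsProbabilityMeasure μ] [IsProbabilityMeasure ν]
    {L : Set (Fin (m + 1) → ℝ)} (hK : IsCompact K) (hL : IsCompact L) (hμK : μ Kᶜ = 0)
    (hνL : ν Lᶜ = 0) {s s' t β : ℝ} (hs : s ≤ m + 1) (hss' : s < s') (hβ : 0 < β)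
    (hβm : β < m) (hβt : β < t) (hsβ : 2 * m < s + β) (hμ : IsFrostman μ s')
    (hν : IsFrostman ν t) :
    ∃ R : ℝ, ∃ᶠ v in ae (volume.restrict (closedBall (0 : Fin m → ℝ) R)),
      ENNReal.ofReal β ≤ dimH (skewProj v '' K ∩ skewProj v '' L) := by
  have hhyperplane (c : ℝ) : μ {x | x 0 = c} = 0 := by
    refine hμ.measure_eq_zero (measurableSet_eq_fun (measurable_pi_apply 0) measurable_const)
      ((dimH_hyperplane_le m c).trans_lt ?_)
    rw [← ENNReal.ofReal_natCast]
    exact (ENNReal.ofReal_lt_ofReal_iff (by linarith)).2 (by linarith)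
  obtain ⟨a, ha, hpos⟩ := exists_pos_measure_le_ne_zero
    (ae_prod_abs_sub_zero_pos (ν := ν) hhyperplane)
  obtain ⟨S, hS, hKL⟩ := (hK.union hL).isBounded.subset_closedBall_lt 0 0
  have hμS : μ (closedBall 0 S)ᶜ = 0 :=
    measure_mono_null (compl_subset_compl.2 (subset_union_left.trans hKL)) hμK
  have hνS : ν (closedBall 0 S)ᶜ = 0 :=
    measure_mono_null (compl_subset_compl.2 (subset_union_right.trans hKL)) hνL
  -- The radius is such that every pair of points at height difference at least `a` is joined by
  -- a line whose direction lies well inside the ball.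
  obtain ⟨R, hR, haR⟩ : ∃ R : ℝ, 1 ≤ R ∧ 2 * S + 2 ≤ (R - 1) * a := by
    refine ⟨(2 * S + 2) / a + 1, ?_, ?_⟩
    · rw [le_add_iff_nonneg_left]
      positivity
    · rw [add_sub_cancel_right, div_mul_cancel₀ _ ha.ne']
  have hEν : sectionEnergy β R ν univ ≠ ∞ := sectionEnergy_univ_ne_top hβ hβm hR hβt hν
  have hc : 0 < ((2 * S) ^ m)⁻¹ * (μ.prod ν).real {z | a ≤ |(z.1 - z.2) 0|} :=
    mul_pos (by positivity) (ENNReal.toReal_pos hpos (measure_ne_top _ _))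
  have hfreq := frequently_measure_skewProj_mem_image_ne_zero hR hs hβ hβm.le hsβ
    (hμ.lintegral_edist_ne_top (by linarith) hss') hEν hK hμK hμS hνS le_rfl hc
    fun r hr hr₁ => le_pairing_univ ha hR haR hr hr₁ hμS hνS le_rfl
  exact ⟨R, (hfreq.and_eventually (ae_lintegral_edist_skewProj_lt_top hEν)).mono fun v hv =>
    le_dimH_inter_of_energy_ne_top hK hL hνL hβ.le hv.2.ne hv.1⟩

end Intersection

/-! ### From skew projections to orthogonal projections -/

section Orthogonal

open Filter

theorem exists_exponents_between {M a b g : ℝ} (hb : b ≤ M) (hsum : 2 * M < a + b) (hg : g < b) :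
    ∃ s s' t β : ℝ, M < s ∧ s < s' ∧ s' < a ∧ g < β ∧ β < t ∧ t < b ∧ 2 * M < s + β := by
  obtain ⟨s', hs'₁, hs'₂⟩ := exists_between (show 2 * M - b < a by linarith)
  obtain ⟨s, hs₁, hs₂⟩ := exists_between hs'₁
  obtain ⟨t, ht₁, ht₂⟩ := exists_between (max_lt hg (show 2 * M - s < b by linarith))
  obtain ⟨β, hβ₁, hβ₂⟩ := exists_between ht₁
  obtain ⟨hgβ, hsβ⟩ := max_lt_iff.1 hβ₁
  exact ⟨s, s', t, β, by linarith, hs₂, hs'₂, hgβ, hβ₂, ht₂, by linarith⟩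

variable {m : ℕ}

theorem exists_frequently_lt_dimH_inter {A B : Set (Fin (m + 1) → ℝ)}
    (hA : AnalyticSet A) (hB : AnalyticSet B) (hdB : dimH B ≤ m)
    (hsum : 2 * (m : ℝ≥0∞) < dimH A + dimH B) {γ : ℝ≥0∞} (hγ : γ < dimH B) :
    ∃ R : ℝ, ∃ᶠ v in ae (volume.restrict (closedBall (0 : Fin m → ℝ) R)),
      γ < dimH (skewProj v '' A ∩ skewProj v '' B) := by
  have hdA : dimH A ≤ (m + 1 : ℕ) :=
    (dimH_mono (subset_univ A)).trans_eq (Real.dimH_univ_pi_fin (m + 1))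
  lift γ to NNReal using hγ.ne_top with g
  obtain ⟨a, ha⟩ : ∃ a : NNReal, a = dimH A :=
    ⟨_, ENNReal.coe_toNNReal (ne_top_of_le_ne_top (by finiteness) hdA)⟩
  obtain ⟨b, hb⟩ : ∃ b : NNReal, b = dimH B :=
    ⟨_, ENNReal.coe_toNNReal (ne_top_of_le_ne_top (by finiteness) hdB)⟩
  rw [← ha] at hdA hsum
  rw [← hb] at hdB hsum hγ
  norm_cast at hdA hdB hsum hγ
  obtain ⟨s, s', t, β, hms, hss', hs'a, hgβ, hβt, htb, hsβ⟩ :=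
    exists_exponents_between (M := m) (a := a) (b := b) (g := g) (mod_cast hdB) (mod_cast hsum)
      (mod_cast hγ)
  have hs' : 0 < s' := (Nat.cast_nonneg m).trans_lt (hms.trans hss')
  have hβ : 0 < β := g.2.trans_lt hgβ
  have ht : 0 < t := hβ.trans hβt
  have hsm : s ≤ m + 1 := ((hss'.trans hs'a).trans_le (mod_cast hdA)).le
  have hβm : β < m := (hβt.trans htb).trans_le (mod_cast hdB)
  obtain ⟨K, hKA, hK, μ, hμ, hμK, hμF⟩ := exists_frostman_measure hA (t := s') hs'
    (by rwa [← ha, ENNReal.ofReal_lt_coe_iff hs'.le])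
  obtain ⟨L, hLB, hL, ν, hν, hνL, hνF⟩ := exists_frostman_measure hB (t := t) ht
    (by rwa [← hb, ENNReal.ofReal_lt_coe_iff ht.le])
  obtain ⟨R, hR⟩ := exists_frequently_le_dimH_inter hK hL hμK hνL hsm hss' hβ hβm hβt hsβ hμF hνF
  refine ⟨R, hR.mono fun v hv => ?_⟩
  calc (g : ℝ≥0∞) < ENNReal.ofReal β := by
        rwa [← ENNReal.ofReal_coe_nnreal, ENNReal.ofReal_lt_ofReal_iff hβ]
    _ ≤ _ := hv
    _ ≤ _ := dimH_mono (inter_subset_inter (image_mono hKA) (image_mono hLB))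

theorem lipschitzWith_skewProj (v : Fin m → ℝ) : LipschitzWith (1 + ‖v‖₊) (skewProj v) :=
  LipschitzWith.of_dist_le_mul fun x y => by
    rw [dist_eq_norm, dist_eq_norm, ← skewProj_sub]
    exact norm_skewProj_le v _

theorem skewProj_sub_smul {v : Fin m → ℝ} {e : Fin (m + 1) → ℝ} (he : Fin.tail e = e 0 • v) (c : ℝ)
    (x : Fin (m + 1) → ℝ) : skewProj v (x - c • e) = skewProj v x := by
  have he_smul : skewProj v (c • e) = 0 := by
    change c • Fin.tail e - (c * e 0) • v = 0
    rw [he, smul_smul, sub_self]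
  rw [skewProj_sub, he_smul, sub_zero]

theorem eq_add_smul_of_skewProj_eq {v : Fin m → ℝ} {e : Fin (m + 1) → ℝ}
    (he : Fin.tail e = e 0 • v) (he₀ : e 0 ≠ 0) {x y : Fin (m + 1) → ℝ}
    (h : skewProj v x = skewProj v y) : x = y + ((x 0 - y 0) / e 0) • e := by
  have htail : Fin.tail x = Fin.tail y + (x 0 - y 0) • v := by
    rw [sub_eq_iff_eq_add.1 (show Fin.tail x - x 0 • v = Fin.tail y - y 0 • v from h)]
    module
  ext i
  refine Fin.cases ?_ (fun i => ?_) i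
  · simp [he₀]
  · have hi := congrFun htail i
    have hei := congrFun he i
    simp only [Fin.tail, Pi.add_apply, Pi.smul_apply, smul_eq_mul] at hi hei ⊢
    rw [hi, hei, ← mul_assoc, div_mul_cancel₀ _ he₀]

theorem add_smul_sub_inner_smul {E : Type*} [NormedAddCommGroup E] [InnerProductSpace ℝ E] {e : E}
    (he : ‖e‖ = 1) (y : E) (c : ℝ) :
    (y + c • e) - ⟪y + c • e, e⟫ • e = y - ⟪y, e⟫ • e := by
  rw [inner_add_left, real_inner_smul_left, real_inner_self_eq_norm_sq, he]
  module

theorem dimH_skewProj_inter_le {v : Fin m → ℝ} {e : EuclideanSpace ℝ (Fin (m + 1))}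
    (he : ‖e‖ = 1) (hev : Fin.tail (⇑e) = e 0 • v) (he₀ : e 0 ≠ 0)
    (A B : Set (EuclideanSpace ℝ (Fin (m + 1)))) :
    dimH (skewProj v '' (EuclideanSpace.equiv (Fin (m + 1)) ℝ '' A) ∩
        skewProj v '' (EuclideanSpace.equiv (Fin (m + 1)) ℝ '' B)) ≤
      dimH ((fun x => x - ⟪x, e⟫ • e) '' A ∩ (fun x => x - ⟪x, e⟫ • e) '' B) := by
  have hlip := (lipschitzWith_skewProj v).comp (EuclideanSpace.equiv (Fin (m + 1)) ℝ).lipschitz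
  refine (dimH_mono ?_).trans (hlip.dimH_image_le _)
  rintro _ ⟨⟨_, ⟨a, ha, rfl⟩, rfl⟩, ⟨_, ⟨b, hb, rfl⟩, hab⟩⟩
  refine ⟨a - ⟪a, e⟫ • e, ⟨⟨a, ha, rfl⟩, ⟨b, hb, ?_⟩⟩, skewProj_sub_smul hev _ _⟩
  obtain ⟨c, hc⟩ : ∃ c : ℝ, b = a + c • e :=
    ⟨_, PiLp.ext (congrFun (eq_add_smul_of_skewProj_eq hev he₀ hab))⟩
  simp only [hc]
  exact add_smul_sub_inner_smul he a c

theorem abs_inv_mul_sub_inv_mul_le {c d x x' y y' : ℝ} (hc : 0 < c) (hx : c ≤ x) (hx' : c ≤ x')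
    (hx'₁ : |x'| ≤ 1) (hy'₁ : |y'| ≤ 1) (hxx' : |x - x'| ≤ d) (hyy' : |y - y'| ≤ d) :
    |x⁻¹ * y - x'⁻¹ * y'| ≤ 2 / c ^ 2 * d := by
  have hx₀ : 0 < x := hc.trans_le hx
  have hx'₀ : 0 < x' := hc.trans_le hx'
  have heq : x⁻¹ * y - x'⁻¹ * y' = ((y - y') * x' - y' * (x - x')) / (x * x') := by
    field_simp
    ring
  have hnum : |(y - y') * x' - y' * (x - x')| ≤ 2 * d := calc
    _ ≤ |y - y'| * |x'| + |y'| * |x - x'| := by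
      simpa only [abs_mul] using abs_sub ((y - y') * x') (y' * (x - x'))
    _ ≤ d * 1 + 1 * d := by gcongr; exact (abs_nonneg _).trans hxx'
    _ = 2 * d := by ring
  rw [heq, abs_div, abs_of_pos (mul_pos hx₀ hx'₀), div_mul_eq_mul_div, sq]
  gcongr
  exact (abs_nonneg _).trans hnum

theorem lipschitzOnWith_inv_smul_tail {c : ℝ} (hc : 0 < c) :
    LipschitzOnWith (2 / c ^ 2).toNNReal
      (fun e : EuclideanSpace ℝ (Fin (m + 1)) => (e 0)⁻¹ • Fin.tail (⇑e))
      {e | ‖e‖ = 1 ∧ c ≤ e 0} := by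
  refine LipschitzOnWith.of_dist_le_mul fun e ⟨_, he⟩ f ⟨hf₁, hf⟩ => ?_
  rw [Real.coe_toNNReal _ (by positivity)]
  have hsub (j) : |e j - f j| ≤ dist e f := by
    rw [dist_eq_norm]
    exact PiLp.norm_apply_le (e - f) j
  have hf_le (j) : |f j| ≤ 1 := hf₁ ▸ PiLp.norm_apply_le f j
  exact (dist_pi_le_iff (by positivity)).2 fun i => abs_inv_mul_sub_inv_mul_le hc he hf (hf_le 0)
    (hf_le i.succ) (hsub 0) (hsub i.succ)

theorem exists_closedBall_subset_image_inv_smul_tail (m : ℕ) (R : ℝ) :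
    ∃ c : ℝ, 0 < c ∧ closedBall 0 R ⊆
      (fun e : EuclideanSpace ℝ (Fin (m + 1)) => (e 0)⁻¹ • Fin.tail (⇑e)) ''
        {e | ‖e‖ = 1 ∧ c ≤ e 0} := by
  let w (v : Fin m → ℝ) : EuclideanSpace ℝ (Fin (m + 1)) := WithLp.toLp 2 (Fin.cons 1 v)
  have hw : Continuous w := (PiLp.continuous_toLp 2 _).comp (continuous_const.finCons continuous_id)
  obtain ⟨N, hN₀, hN⟩ := ((isCompact_closedBall 0 R).image hw).isBounded.exists_pos_norm_le
  have hw₀ (v) : 0 < ‖w v‖ := norm_pos_iff.2 fun h => one_ne_zero (congrArg (fun e => e 0) h)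
  refine ⟨N⁻¹, by positivity, fun v hv => ⟨‖w v‖⁻¹ • w v, ⟨?_, ?_⟩, ?_⟩⟩
  · rw [norm_smul, norm_inv, norm_norm, inv_mul_cancel₀ (hw₀ v).ne']
  · change N⁻¹ ≤ ‖w v‖⁻¹ * 1
    rw [mul_one]
    exact inv_anti₀ (hw₀ v) (hN _ (mem_image_of_mem _ hv))
  · change (‖w v‖⁻¹ * 1)⁻¹ • ‖w v‖⁻¹ • v = v
    rw [mul_one, inv_smul_smul₀ (inv_ne_zero (hw₀ v).ne')]

theorem hausdorffMeasure_pos_of_frequently {P : EuclideanSpace ℝ (Fin (m + 1)) → Prop}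
    {Q : (Fin m → ℝ) → Prop} {R : ℝ}
    (hQ : ∃ᶠ v in ae (volume.restrict (closedBall (0 : Fin m → ℝ) R)), Q v)
    (hQP : ∀ (v : Fin m → ℝ) (e : EuclideanSpace ℝ (Fin (m + 1))), ‖e‖ = 1 → e 0 ≠ 0 →
      Fin.tail (⇑e) = e 0 • v → Q v → P e) :
    0 < μH[(m : ℝ)] {e : EuclideanSpace ℝ (Fin (m + 1)) | ‖e‖ = 1 ∧ P e} := by
  obtain ⟨c, hc, hball⟩ := exists_closedBall_subset_image_inv_smul_tail m R
  refine pos_iff_ne_zero.2 fun hzero => hQ ?_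
  have himage := ((lipschitzOnWith_inv_smul_tail (m := m) hc).mono
    (inter_subset_left (t := {e | ‖e‖ = 1 ∧ P e}))).hausdorffMeasure_image_le (Nat.cast_nonneg m)
  have hvol : (μH[(m : ℝ)] : Measure (Fin m → ℝ)) = volume := by
    simpa using hausdorffMeasure_pi_real (ι := Fin m)
  rw [measure_mono_null inter_subset_right hzero, mul_zero, nonpos_iff_eq_zero, hvol] at himage
  filter_upwards [ae_restrict_of_ae (measure_eq_zero_iff_ae_notMem.1 himage),
    ae_restrict_mem isClosed_closedBall.measurableSet] with v hv hvR hvQ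
  obtain ⟨e, ⟨he, hec⟩, hev⟩ := hball hvR
  have he₀ : e 0 ≠ 0 := (hc.trans_le hec).ne'
  refine hv ⟨e, ⟨⟨he, hec⟩, he, hQP v e he he₀ ?_ hvQ⟩, hev⟩
  rw [← hev, smul_inv_smul₀ he₀]

end Orthogonal

theorem dimH_le_card {ι : Type*} [Fintype ι] (A : Set (EuclideanSpace ℝ ι)) :
    dimH A ≤ Fintype.card ι := by
  rw [← (EuclideanSpace.equiv ι ℝ).dimH_image A]
  exact (dimH_mono (subset_univ _)).trans_eq (Real.dimH_univ_pi ι)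

theorem stmt_4_general (n : ℕ) (hn : 2 ≤ n)
    (A B : Set (EuclideanSpace ℝ (Fin n)))
    (hA : AnalyticSet A) (hB : AnalyticSet B)
    (hdB : dimH B ≤ (n : ℝ≥0∞) - 1)
    (hsum : 2 * ((n : ℝ≥0∞) - 1) < dimH A + dimH B)
    (ε : ℝ) (hε : 0 < ε) :
    0 < μH[(n : ℝ) - 1]
      {e : EuclideanSpace ℝ (Fin n) | ‖e‖ = 1 ∧
        dimH B - ENNReal.ofReal ε <
          dimH ((fun x => x - ⟪x, e⟫ • e) '' A ∩ (fun x => x - ⟪x, e⟫ • e) '' B)} := by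
  obtain ⟨m, rfl⟩ : ∃ m, n = m + 1 := ⟨n - 1, by lia⟩
  have hm : (((m + 1 : ℕ) : ℝ≥0∞) - 1) = m := by simp
  have hm' : ((m + 1 : ℕ) : ℝ) - 1 = m := by simp
  rw [hm] at hdB hsum
  rw [hm']
  have hB₀ : dimH B ≠ 0 := by
    intro h₀
    have hlt : (2 * m : ℝ≥0∞) < (m + 1 : ℕ) := by
      simpa [h₀] using hsum.trans_le (add_le_add_left (dimH_le_card A) _)
    have : 2 * m < m + 1 := mod_cast hlt
    lia
  have hγ : dimH B - ENNReal.ofReal ε < dimH B :=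
    ENNReal.sub_lt_self (ne_top_of_le_ne_top (by finiteness) hdB) hB₀ (by simpa using hε)
  set φ := EuclideanSpace.equiv (Fin (m + 1)) ℝ
  have hφ (T) : dimH (φ '' T) = dimH T := φ.dimH_image T
  rw [← hφ] at hdB hsum
  rw [← hφ B] at hsum hγ
  obtain ⟨R, hR⟩ := exists_frequently_lt_dimH_inter (hA.image_of_continuous φ.continuous)
    (hB.image_of_continuous φ.continuous) hdB hsum hγ
  exact hausdorffMeasure_pos_of_frequently hR fun v e he he₀ hev hlt =>
    (hφ B ▸ hlt).trans_le (dimH_skewProj_inter_le he hev he₀ A B)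

theorem stmt_4 (n : ℕ) (hn : 2 ≤ n)
    (A B : Set (EuclideanSpace ℝ (Fin n)))
    (hA : MeasurableSet A) (hB : MeasurableSet B)
    (hdA : (n : ℝ≥0∞) - 1 < dimH A) (hdB : dimH B ≤ (n : ℝ≥0∞) - 1)
    (hsum : 2 * ((n : ℝ≥0∞) - 1) < dimH A + dimH B)
    (ε : ℝ) (hε : 0 < ε) :
    0 < μH[(n : ℝ) - 1]
      {e : EuclideanSpace ℝ (Fin n) | ‖e‖ = 1 ∧
        dimH B - ENNReal.ofReal ε <
          dimH ((fun x => x - ⟪x, e⟫ • e) '' A ∩ (fun x => x - ⟪x, e⟫ • e) '' B)} :=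
  stmt_4_general n hn A B hA.analyticSet hB.analyticSet hdB hsum ε hε
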